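/- Let d ≥ 3 and let 𝔢 be a dispersion relation of class C³ satisfying condition (M). There exists a constant c(𝔢) > 0, depending only on 𝔢, such that for every potential V : Γ → ℝ with Φ_{2,3}(V) < c(𝔢), the bounded self-adjoint operator B = h(|∇𝔢|²) + C_V is positive (⟨ψ, Bψ⟩ ≥ 0 for all ψ ∈ ℓ²(Γ)) and has no eigenvalues. -/

import Mathlib

open MeasureTheory Complex Real
open scoped ENNReal

noncomputable section

namespace LatSch

/-- The lattice `Γ = ℤ^d`. -/
abbrev Γd (d : ℕ) := Fin d → ℤ

/-- The Hilbert space `ℓ²(Γ)`. -/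
abbrev L2 (d : ℕ) := lp (fun _ : Γd d => ℂ) 2

/-- Euclidean norm of a lattice point. -/
def lnorm {d : ℕ} (x : Γd d) : ℝ := Real.sqrt (∑ i, ((x i : ℝ)) ^ 2)

/-- The standard basis vector `δ_x` of `ℓ²(Γ)`. -/
def delta {d : ℕ} (x : Γd d) : L2 d := lp.single 2 x 1

local notation "⟪" a ", " b "⟫" => @inner ℂ _ _ a b

/-- The cube `[-π, π]^d`, a fundamental domain of the torus. -/
def torusBox (d : ℕ) : Set (Fin d → ℝ) := Set.univ.pi fun _ => Set.Icc (-π) π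

/-- `⟨p, m⟩` for `p ∈ ℝ^d`, `m ∈ ℤ^d`. -/
def dotZ {d : ℕ} (p : Fin d → ℝ) (m : Γd d) : ℝ := ∑ i, p i * (m i : ℝ)

/-- Fourier coefficient `f̂(m) = (2π)^{-d} ∫_{[-π,π]^d} f(p) e^{i⟨p,m⟩} dp`. -/
def fCoeff {d : ℕ} (f : (Fin d → ℝ) → ℝ) (m : Γd d) : ℂ :=
  ((1 / (2 * π) ^ d : ℝ) : ℂ) *
    ∫ p in torusBox d, (f p : ℂ) * Complex.exp (Complex.I * (dotZ p m : ℝ))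

/-- `H` is the Fourier multiplier (hopping matrix) `h(f)`, characterized by its
matrix elements `⟨δ_x, H δ_y⟩ = f̂(x - y)`. -/
def IsMultiplier {d : ℕ} (f : (Fin d → ℝ) → ℝ) (H : L2 d →L[ℂ] L2 d) : Prop :=
  ∀ x y : Γd d, ⟪delta x, H (delta y)⟫ = fCoeff f (x - y)

/-- `M` is the operator of multiplication by the potential `V`. -/
def IsMulOp {d : ℕ} (V : Γd d → ℝ) (M : L2 d →L[ℂ] L2 d) : Prop :=
  ∀ (ψ : L2 d) (x : Γd d), (M ψ : ∀ _ : Γd d, ℂ) x = (V x : ℂ) * (ψ : ∀ _ : Γd d, ℂ) x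

/-- Partial derivative `∂_{p_k} f (p)`. -/
def pd {d : ℕ} (f : (Fin d → ℝ) → ℝ) (k : Fin d) (p : Fin d → ℝ) : ℝ :=
  fderiv ℝ f p (Pi.single k 1)

/-- `|∇f|²(p) = Σ_k (∂_{p_k} f(p))²`. -/
def gradSq {d : ℕ} (f : (Fin d → ℝ) → ℝ) (p : Fin d → ℝ) : ℝ := ∑ k, pd f k p ^ 2

/-- The Hessian matrix of `f` at `p`. -/
def hess {d : ℕ} (f : (Fin d → ℝ) → ℝ) (p : Fin d → ℝ) : Matrix (Fin d) (Fin d) ℝ :=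
  Matrix.of fun i j => fderiv ℝ (fun q => fderiv ℝ f q (Pi.single j 1)) p (Pi.single i 1)

/-- All critical points of `f` are nondegenerate (`f` is a Morse function). -/
def IsMorse {d : ℕ} (f : (Fin d → ℝ) → ℝ) : Prop :=
  ∀ p, fderiv ℝ f p = 0 → (hess f p).det ≠ 0

/-- `2πℤ^d`-periodicity. -/
def Periodic2pi {d : ℕ} (f : (Fin d → ℝ) → ℝ) : Prop :=
  ∀ (p : Fin d → ℝ) (m : Γd d), f (p + fun i => 2 * π * (m i : ℝ)) = f p

/-- A dispersion relation: a `2πℤ^d`-periodic function with minimum `0`. -/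
def IsDispersion {d : ℕ} (f : (Fin d → ℝ) → ℝ) : Prop :=
  Periodic2pi f ∧ (∀ p, 0 ≤ f p) ∧ (∃ p, f p = 0)

/-- Condition (M): `𝔢` and `|∇𝔢|²` are Morse functions. -/
def CondM {d : ℕ} (f : (Fin d → ℝ) → ℝ) : Prop := IsMorse f ∧ IsMorse (gradSq f)

/-- `Φ_{m,n}(V) = (Σ_x |V(x)|^{1/m} (1+|x|)^n)^m`, valued in `[0,∞]`. -/
def Phi {d : ℕ} (m n : ℕ) (V : Γd d → ℝ) : ℝ≥0∞ :=
  (∑' x : Γd d, ENNReal.ofReal (|V x| ^ ((1 : ℝ) / m) * (1 + lnorm x) ^ n)) ^ m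

/-- The set of eigenvectors of `H` (with real eigenvalue). -/
def eigvecs {d : ℕ} (H : L2 d →L[ℂ] L2 d) : Set (L2 d) :=
  {ψ : L2 d | ψ ≠ 0 ∧ ∃ μ : ℝ, H ψ = (μ : ℂ) • ψ}

/-- `N_pp[H]`: the Hilbert-space dimension of the closed linear span of all
eigenvectors of `H`. -/
def Npp {d : ℕ} (H : L2 d →L[ℂ] L2 d) : Cardinal :=
  Module.rank ℂ ((Submodule.span ℂ (eigvecs H)).topologicalClosure)

/-- The Fourier transform `ĝ_x(p) = (i/2·|∇𝔢(p)|² + ⟨∇𝔢(p), x⟩) e^{-i⟨p,x⟩}`. -/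
def ghat {d : ℕ} (e : (Fin d → ℝ) → ℝ) (x : Γd d) (p : Fin d → ℝ) : ℂ :=
  ((Complex.I / 2) * ((gradSq e p : ℝ) : ℂ) + ((∑ k, pd e k p * (x k : ℝ) : ℝ) : ℂ)) *
    Complex.exp (-(Complex.I * (dotZ p x : ℝ)))

/-- `g : Γ → ℓ²(Γ)` is the family of vectors `g_x` with Fourier transform `ĝ_x`. -/
def IsGVec {d : ℕ} (e : (Fin d → ℝ) → ℝ) (g : Γd d → L2 d) : Prop :=
  ∀ x m : Γd d,
    (g x : ∀ _ : Γd d, ℂ) m =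
      ((1 / (2 * π) ^ d : ℝ) : ℂ) *
        ∫ p in torusBox d, ghat e x p * Complex.exp (Complex.I * (dotZ p m : ℝ))

/-- `C` is the bounded self-adjoint realization
`C_V = Σ_x i V(x) (|δ_x⟩⟨g_x| - |g_x⟩⟨δ_x|)` of the commutator `i[V, A(𝔢)]`. -/
def IsCommOp {d : ℕ} (V : Γd d → ℝ) (g : Γd d → L2 d) (C : L2 d →L[ℂ] L2 d) : Prop :=
  ∀ ψ : L2 d,
    HasSum (fun x : Γd d =>
      (Complex.I * (V x : ℂ)) • (⟪g x, ψ⟫ • delta x - ⟪delta x, ψ⟫ • g x)) (C ψ)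

/-- `R` is the resolvent `(z - H)^{-1}`. -/
def IsResolventAt {d : ℕ} (H : L2 d →L[ℂ] L2 d) (z : ℂ) (R : L2 d →L[ℂ] L2 d) : Prop :=
  R.comp (z • (1 : L2 d →L[ℂ] L2 d) - H) = 1 ∧ (z • (1 : L2 d →L[ℂ] L2 d) - H).comp R = 1

/-- `‖f‖_{C^m} ≤ C`: all partial derivatives of order `≤ m` are bounded by `C`. -/
def CmNormLe {d : ℕ} (m : ℕ) (f : (Fin d → ℝ) → ℝ) (C : ℝ) : Prop :=
  ∀ j : ℕ, j ≤ m → ∀ (p : Fin d → ℝ) (k : Fin j → Fin d),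
    |iteratedFDeriv ℝ j f p (fun i => Pi.single (k i) 1)| ≤ C

/-- `K(𝔢) ≥ K`: at every critical point, every eigenvalue `λ` of the Hessian
satisfies `|λ|^{1/2} ≥ K`. -/
def MinCurvGe {d : ℕ} (f : (Fin d → ℝ) → ℝ) (K : ℝ) : Prop :=
  ∀ p, fderiv ℝ f p = 0 → ∀ (lam : ℝ) (v : Fin d → ℝ), v ≠ 0 →
    (hess f p).mulVec v = lam • v → K ^ 2 ≤ |lam|

/-- The set of thresholds `Thr(𝔢) = 𝔢(Crit(𝔢))`. -/
def Thr {d : ℕ} (f : (Fin d → ℝ) → ℝ) : Set ℝ := f '' {p | fderiv ℝ f p = 0}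


/-- The number of strictly negative eigenvalues of `C`, counted with multiplicity:
the dimension of the span of eigenvectors with strictly negative eigenvalue. -/
def NegCount {d : ℕ} (C : L2 d →L[ℂ] L2 d) : Cardinal :=
  Module.rank ℂ (Submodule.span ℂ
    {ψ : L2 d | ψ ≠ 0 ∧ ∃ μ : ℝ, μ < 0 ∧ C ψ = (μ : ℂ) • ψ})

/-- The number of strictly positive eigenvalues of `C`, counted with multiplicity. -/
def PosCount {d : ℕ} (C : L2 d →L[ℂ] L2 d) : Cardinal :=
  Module.rank ℂ (Submodule.span ℂ
    {ψ : L2 d | ψ ≠ 0 ∧ ∃ μ : ℝ, 0 < μ ∧ C ψ = (μ : ℂ) • ψ})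



/-! ### Torus -/

abbrev Tor (d : ℕ) := UnitAddTorus (Fin d)

def tm (d : ℕ) : Measure (Tor d) := Measure.pi fun _ => (AddCircle.haarAddCircle : Measure (AddCircle (1:ℝ)))

instance (d : ℕ) : IsProbabilityMeasure (tm d) := by unfold tm; infer_instance
instance (d : ℕ) : (tm d).IsAddLeftInvariant := by unfold tm; infer_instance
instance (d : ℕ) : (tm d).IsAddRightInvariant := by infer_instance
instance (d : ℕ) : (tm d).Regular := by infer_instance

abbrev W (d : ℕ) := Lp ℂ 2 (tm d)

def fb (d : ℕ) : HilbertBasis (Γd d) ℂ (W d) := UnitAddTorus.mFourierBasis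

/-- Fundamental-domain section. -/
def Pt {d : ℕ} (θ : Tor d) : Fin d → ℝ := fun i => (-(2 * π)) * (AddCircle.equivIoc 1 (-1/2 : ℝ) (θ i) : ℝ)

lemma fb_apply {d : ℕ} (m : Γd d) : (fb d m : Tor d → ℂ) =ᵐ[tm d] fun θ => Complex.exp (-(Complex.I * (dotZ (Pt θ) m : ℝ))) := by
  have h0 : fb d m = _ := congrFun (UnitAddTorus.coe_mFourierBasis (d := Fin d)) m
  have h : (fb d m : Tor d → ℂ) =ᵐ[tm d] UnitAddTorus.mFourier m := by
    rw [h0]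
    exact UnitAddTorus.coeFn_mFourierLp 2 m
  refine h.trans (Filter.Eventually.of_forall fun θ => ?_)
  simp only [UnitAddTorus.mFourier, ContinuousMap.coe_mk]
  have : ∀ i, θ i = ((AddCircle.equivIoc 1 (-1/2 : ℝ) (θ i) : ℝ) : AddCircle (1:ℝ)) := by
    intro i
    exact ((AddCircle.equivIoc 1 (-1/2 : ℝ)).symm_apply_apply (θ i)).symm
  have h2 : ∀ i, fourier (m i) (θ i) = Complex.exp (-(Complex.I * ((Pt θ i * m i : ℝ) : ℂ))) := by
    intro i
    conv_lhs => rw [this i]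
    rw [fourier_coe_apply]
    congr 1
    simp only [Pt]
    push_cast
    ring
  simp_rw [h2]
  rw [← Complex.exp_sum]
  congr 1
  simp [dotZ, Finset.mul_sum]

lemma mp_Pt (d : ℕ) : MeasurePreserving (Pt (d := d)) (tm d)
    (ENNReal.ofReal ((2 * π) ^ d)⁻¹ • (volume.restrict (torusBox d))) := by
  have h1 : MeasurePreserving (UnitAddTorus.measurableEquivPiIoc (fun _ : Fin d => (-1/2 : ℝ))) (tm d) (Measure.comap Subtype.val volume) :=
    UnitAddTorus.measurePreserving_equivPiIoc (fun _ : Fin d => (-1/2 : ℝ))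
  have hm : MeasurableSet {x : Fin d → ℝ | ∀ i, x i ∈ Set.Ioc (-1/2 : ℝ) (-1/2 + 1)} :=
    MeasurableSet.univ_pi' (fun i => measurableSet_Ioc)
  have h2 : MeasurePreserving (Subtype.val : {x : Fin d → ℝ // ∀ i, x i ∈ Set.Ioc (-1/2 : ℝ) (-1/2 + 1)} → (Fin d → ℝ)) (Measure.comap Subtype.val volume) (volume.restrict {x : Fin d → ℝ | ∀ i, x i ∈ Set.Ioc (-1/2 : ℝ) (-1/2 + 1)}) :=
    ⟨measurable_subtype_coe, map_comap_subtype_coe hm volume⟩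
  have hpi : (-(2 * π)) ≠ 0 := by simp [Real.pi_ne_zero]
  have h3 : MeasurePreserving (fun x : Fin d → ℝ => (-(2 * π)) • x) volume
      (ENNReal.ofReal ((2 * π) ^ d)⁻¹ • volume) := by
    refine ⟨by fun_prop, ?_⟩
    have := Measure.map_addHaar_smul (volume : Measure (Fin d → ℝ)) hpi
    rw [this]
    congr 2
    simp [abs_inv, abs_mul, abs_of_pos Real.pi_pos]
  have h4 := h3.restrict_preimage (s := Set.univ.pi fun _ => Set.Ico (-π) π) (MeasurableSet.univ_pi (fun i => measurableSet_Ico))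
  have h5 : (fun x : Fin d → ℝ => (-(2 * π)) • x) ⁻¹' (Set.univ.pi fun _ => Set.Ico (-π) π) = {x : Fin d → ℝ | ∀ i, x i ∈ Set.Ioc (-1/2 : ℝ) (-1/2 + 1)} := by
    ext x
    simp only [Set.mem_preimage, Set.mem_pi, Set.mem_univ, true_imp_iff, Set.mem_ofPred_eq, Pi.smul_apply, smul_eq_mul, Set.mem_Ico, Set.mem_Ioc]
    refine forall_congr' fun i => ?_
    have := Real.pi_pos
    constructor <;> rintro ⟨h, h'⟩ <;> constructor <;> nlinarith
  rw [h5] at h4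
  have h6 : (volume : Measure (Fin d → ℝ)).restrict (Set.univ.pi fun _ => Set.Ico (-π) π) = volume.restrict (torusBox d) := by
    apply Measure.restrict_congr_set
    have := Measure.univ_pi_Ico_ae_eq_Icc (μ := fun _ : Fin d => (volume : Measure ℝ)) (f := fun _ => -π) (g := fun _ => π)
    unfold torusBox
    rw [Set.pi_univ_Icc]
    exact this
  rw [Measure.restrict_smul, h6] at h4
  exact h4.comp (h2.comp h1)

lemma Pt_shift {d : ℕ} {α : Type*} (q : (Fin d → ℝ) → α)
    (hq : ∀ (p : Fin d → ℝ) (m : Γd d), q (p + fun i => 2 * π * (m i : ℝ)) = q p)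
    (θ : Tor d) (t : Fin d → ℝ) :
    q (Pt (θ + fun i => ((-(t i / (2 * π)) : ℝ) : AddCircle (1:ℝ)))) = q (Pt θ + t) := by
  have this : ∀ x : AddCircle (1:ℝ), ((AddCircle.equivIoc 1 (-1/2 : ℝ) x : ℝ) : AddCircle (1:ℝ)) = x := by
    intro x
    exact ((AddCircle.equivIoc 1 (-1/2 : ℝ)).symm_apply_apply x)
  have : ∀ i, ∃ m : ℤ, Pt θ i + t i + 2 * π * (m : ℝ) = Pt (θ + fun i => ((-(t i / (2 * π)) : ℝ) : AddCircle (1:ℝ))) i := by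
    intro i
    have h1 := this (θ i + ((-(t i / (2 * π)) : ℝ) : AddCircle (1:ℝ)))
    conv_rhs at h1 => rw [← this (θ i), ← AddCircle.coe_add]
    rw [← sub_eq_zero, ← AddCircle.coe_sub, AddCircle.coe_eq_zero_iff] at h1
    obtain ⟨n, hn⟩ := h1
    refine ⟨-n, ?_⟩
    simp only [Pt, Pi.add_apply]
    simp only [zsmul_eq_mul, mul_one] at hn
    have hpi := Real.pi_ne_zero
    have e1 : ((AddCircle.equivIoc 1 (-1/2 : ℝ) (θ i + ((-(t i / (2 * π)) : ℝ) : AddCircle (1:ℝ)))) : ℝ) = n + ((AddCircle.equivIoc 1 (-1/2 : ℝ) (θ i) : ℝ) + -(t i / (2 * π))) := by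
      rw [hn]; ring
    rw [e1]
    push_cast
    field_simp
    ring
  choose m hm using this
  rw [← hq (Pt θ + t) m]
  congr 1
  ext i
  exact (hm i).symm

/-! ### Operators on the torus -/

def mulOp {d : ℕ} (a : Tor d → ℝ) (ha : MemLp (fun θ => (a θ : ℂ)) ∞ (tm d)) : W d →L[ℂ] W d :=
  (ContinuousLinearMap.mul ℂ ℂ).holderL (tm d) ∞ 2 2 ha.toLp

lemma mulOp_coe {d : ℕ} (a : Tor d → ℝ) (ha : MemLp (fun θ => (a θ : ℂ)) ∞ (tm d)) (u : W d) :
    (mulOp a ha u : Tor d → ℂ) =ᵐ[tm d] fun θ => (a θ : ℂ) * u θ := by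
  have h1 := (ContinuousLinearMap.mul ℂ ℂ).coeFn_holder (r := 2) ha.toLp u
  filter_upwards [h1, ha.coeFn_toLp] with θ h1 h2
  have : mulOp a ha u = (ContinuousLinearMap.mul ℂ ℂ).holder 2 ha.toLp u := rfl
  rw [this, h1, h2]
  rfl

lemma mulOp_symm {d : ℕ} (a : Tor d → ℝ) (ha : MemLp (fun θ => (a θ : ℂ)) ∞ (tm d)) (u v : W d) :
    ⟪mulOp a ha u, v⟫ = ⟪u, mulOp a ha v⟫ := by
  rw [L2.inner_def, L2.inner_def]
  refine integral_congr_ae ?_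
  filter_upwards [mulOp_coe a ha u, mulOp_coe a ha v] with θ h1 h2
  rw [h1, h2]
  simp
  ring

def trOp {d : ℕ} (τ : Tor d) : W d →ₗᵢ[ℂ] W d :=
  Lp.compMeasurePreservingₗᵢ ℂ (fun θ => θ + τ) (measurePreserving_add_right (tm d) τ)

lemma trOp_coe {d : ℕ} (τ : Tor d) (u : W d) :
    (trOp τ u : Tor d → ℂ) =ᵐ[tm d] fun θ => u (θ + τ) :=
  Lp.coeFn_compMeasurePreserving u (measurePreserving_add_right (tm d) τ)

lemma ae_shift {d : ℕ} (τ : Tor d) {p : Tor d → Prop} (h : ∀ᵐ θ ∂(tm d), p θ) :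
    ∀ᵐ θ ∂(tm d), p (θ + τ) :=
  (measurePreserving_add_right (tm d) τ).quasiMeasurePreserving.ae h

lemma trOp_trOp_neg {d : ℕ} (τ : Tor d) (u : W d) : trOp τ (trOp (-τ) u) = u := by
  apply Lp.ext
  filter_upwards [trOp_coe τ (trOp (-τ) u), ae_shift τ (trOp_coe (-τ) u)] with θ h1 h2
  rw [h1, h2]
  simp

lemma trOp_inner {d : ℕ} (τ : Tor d) (u v : W d) : ⟪trOp (-τ) u, v⟫ = ⟪u, trOp τ v⟫ := by
  conv_rhs => rw [← trOp_trOp_neg τ u]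
  rw [LinearIsometry.inner_map_map]

def tau {d : ℕ} (j : Fin d) (ε : ℝ) : Tor d :=
  fun i => ((-((Pi.single j ε : Fin d → ℝ) i / (2 * π)) : ℝ) : AddCircle (1:ℝ))

lemma neg_tau {d : ℕ} (j : Fin d) (ε : ℝ) : -tau j ε = tau j (-ε) := by
  ext i
  simp only [tau, Pi.neg_apply, Pi.single_neg]
  rw [← AddCircle.coe_neg]
  congr 1
  ring

lemma continuous_tau {d : ℕ} (j : Fin d) : Continuous (tau j) := by
  unfold tau
  refine continuous_pi fun i => ?_
  have h1 : Continuous fun ε : ℝ => (Pi.single j ε : Fin d → ℝ) i := by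
    have := continuous_single (A := fun _ : Fin d => ℝ) j
    exact (continuous_apply i).comp this
  have h2 : Continuous fun ε : ℝ => (-((Pi.single j ε : Fin d → ℝ) i / (2 * π)) : ℝ) :=
    (h1.div_const _).neg
  exact (AddCircle.continuous_mk' (1:ℝ)).comp h2

lemma tau_zero {d : ℕ} (j : Fin d) : tau j 0 = 0 := by
  ext i; simp [tau]

lemma trOp_tendsto {d : ℕ} (j : Fin d) (u : W d) :
    Filter.Tendsto (fun ε : ℝ => trOp (tau j ε) u) (nhds 0) (nhds u) := by
  have hc : Continuous (fun ε : ℝ => Lp.compMeasurePreserving (fun θ => θ + tau j ε)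
      (measurePreserving_add_right (tm d) (tau j ε)) u) := by
    have hg : Continuous (fun ε : ℝ => (⟨fun θ => θ + tau j ε, by fun_prop⟩ : C(Tor d, Tor d))) := by
      refine ContinuousMap.continuous_of_continuous_uncurry _ ?_
      have := continuous_tau j
      show Continuous (fun x : ℝ × Tor d => x.2 + tau j x.1)
      fun_prop
    exact Continuous.compMeasurePreservingLp (f := fun _ : ℝ => u) continuous_const hg
      (fun ε => measurePreserving_add_right (tm d) (tau j ε)) (by simp)
  have h0 : trOp (tau j 0) u = u := by
    apply Lp.ext
    filter_upwards [trOp_coe (tau j 0) u] with θ h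
    rw [h, tau_zero, add_zero]
  have := hc.tendsto 0
  have h1 : Lp.compMeasurePreserving (fun θ => θ + tau j 0)
      (measurePreserving_add_right (tm d) (tau j 0)) u = u := h0
  rw [h1] at this
  exact this

/-- bounded periodic functions, Lipschitz in coordinate directions -/
structure Nice {d : ℕ} {E : Type*} [NormedAddCommGroup E] (q : (Fin d → ℝ) → E) (M : ℝ) : Prop where
  per : ∀ (p : Fin d → ℝ) (m : Γd d), q (p + fun i => 2 * π * (m i : ℝ)) = q p
  bd : ∀ p, ‖q p‖ ≤ M
  lip : ∀ p (j : Fin d) (s : ℝ), ‖q (p + Pi.single j s) - q p‖ ≤ M * |s|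

lemma Nice.nonneg {d : ℕ} {E : Type*} [NormedAddCommGroup E] {q : (Fin d → ℝ) → E} {M : ℝ}
    (h : Nice q M) : 0 ≤ M := (norm_nonneg _).trans (h.bd 0)

lemma Nice.shift {d : ℕ} {E : Type*} [NormedAddCommGroup E] {q : (Fin d → ℝ) → E} {M : ℝ}
    (h : Nice q M) (j : Fin d) (ε : ℝ) (θ : Tor d) : q (Pt (θ + tau j ε)) = q (Pt θ + Pi.single j ε) :=
  Pt_shift q h.per θ (Pi.single j ε)

def Aop {d : ℕ} (a : Tor d → ℝ) (ha : MemLp (fun θ => (a θ : ℂ)) ∞ (tm d)) (j : Fin d) (ε : ℝ)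
    (u : W d) : W d := (ε : ℂ)⁻¹ • mulOp a ha (trOp (tau j ε) u - u)

def Aop' {d : ℕ} (a : Tor d → ℝ) (ha : MemLp (fun θ => (a θ : ℂ)) ∞ (tm d)) (j : Fin d) (ε : ℝ)
    (u : W d) : W d := (ε : ℂ)⁻¹ • (trOp (tau j (-ε)) (mulOp a ha u) - mulOp a ha u)

lemma Aop_adj {d : ℕ} (a : Tor d → ℝ) (ha : MemLp (fun θ => (a θ : ℂ)) ∞ (tm d)) (j : Fin d) (ε : ℝ)
    (u v : W d) : ⟪Aop' a ha j ε u, v⟫ = ⟪u, Aop a ha j ε v⟫ := by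
  unfold Aop Aop'
  rw [inner_smul_left, inner_smul_right, inner_sub_left, ← neg_tau, trOp_inner, mulOp_symm,
    mulOp_symm, map_sub, inner_sub_right]
  simp

lemma Aop_coe {d : ℕ} (a : Tor d → ℝ) (ha : MemLp (fun θ => (a θ : ℂ)) ∞ (tm d)) (j : Fin d) (ε : ℝ)
    (u : W d) : (Aop a ha j ε u : Tor d → ℂ) =ᵐ[tm d]
      fun θ => (ε : ℂ)⁻¹ * ((a θ : ℂ) * (u (θ + tau j ε) - u θ)) := by
  unfold Aop
  filter_upwards [Lp.coeFn_smul (ε : ℂ)⁻¹ (mulOp a ha (trOp (tau j ε) u - u)),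
    mulOp_coe a ha (trOp (tau j ε) u - u), Lp.coeFn_sub (trOp (tau j ε) u) u,
    trOp_coe (tau j ε) u] with θ h1 h2 h3 h4
  rw [h1, Pi.smul_apply, h2, h3, Pi.sub_apply, h4, smul_eq_mul]

lemma Aop'_coe {d : ℕ} (a : Tor d → ℝ) (ha : MemLp (fun θ => (a θ : ℂ)) ∞ (tm d)) (j : Fin d) (ε : ℝ)
    (u : W d) : (Aop' a ha j ε u : Tor d → ℂ) =ᵐ[tm d]
      fun θ => (ε : ℂ)⁻¹ * ((a (θ + tau j (-ε)) : ℂ) * u (θ + tau j (-ε)) - a θ * u θ) := by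
  unfold Aop'
  filter_upwards [Lp.coeFn_smul (ε : ℂ)⁻¹ (trOp (tau j (-ε)) (mulOp a ha u) - mulOp a ha u),
    mulOp_coe a ha u, ae_shift (tau j (-ε)) (mulOp_coe a ha u),
    Lp.coeFn_sub (trOp (tau j (-ε)) (mulOp a ha u)) (mulOp a ha u),
    trOp_coe (tau j (-ε)) (mulOp a ha u)] with θ h1 h2 h3 h4 h5
  rw [h1, Pi.smul_apply, h4, Pi.sub_apply, h5, h3, h2, smul_eq_mul]

lemma Aop_bd {d : ℕ} {α : (Fin d → ℝ) → ℝ} {L : ℝ} (hα : Nice α L)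
    (ha : MemLp (fun θ => (α (Pt θ) : ℂ)) ∞ (tm d)) (j : Fin d) {ε : ℝ} (hε : 0 < ε)
    {q : (Fin d → ℝ) → ℂ} {M : ℝ} (hq : Nice q M) (v : W d) (hv : v =ᵐ[tm d] fun θ => q (Pt θ)) :
    ∀ᵐ θ ∂(tm d), ‖Aop (fun θ => α (Pt θ)) ha j ε v θ‖ ≤ 2 * L * M := by
  filter_upwards [Aop_coe _ ha j ε v, hv, ae_shift (tau j ε) hv] with θ h1 h2 h3
  rw [h1, h2, h3, hq.shift, norm_mul, norm_mul, norm_inv, Complex.norm_real, Complex.norm_real,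
    Real.norm_of_nonneg hε.le]
  have e1 := hα.bd (Pt θ)
  have e2 := hq.lip (Pt θ) j ε
  rw [abs_of_pos hε] at e2
  have hL := hα.nonneg
  have hM := hq.nonneg
  rw [inv_mul_le_iff₀ hε]
  calc _ ≤ L * (M * ε) := by gcongr
    _ ≤ _ := by nlinarith [mul_nonneg (mul_nonneg hL hM) hε.le]

lemma Aop'_bd {d : ℕ} {α : (Fin d → ℝ) → ℝ} {L : ℝ} (hα : Nice α L)
    (ha : MemLp (fun θ => (α (Pt θ) : ℂ)) ∞ (tm d)) (j : Fin d) {ε : ℝ} (hε : 0 < ε)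
    {q : (Fin d → ℝ) → ℂ} {M : ℝ} (hq : Nice q M) (v : W d) (hv : v =ᵐ[tm d] fun θ => q (Pt θ)) :
    ∀ᵐ θ ∂(tm d), ‖Aop' (fun θ => α (Pt θ)) ha j ε v θ‖ ≤ 2 * L * M := by
  filter_upwards [Aop'_coe _ ha j ε v, hv, ae_shift (tau j (-ε)) hv] with θ h1 h2 h3
  rw [h1, h2, h3, hq.shift, hα.shift, norm_mul, norm_inv, Complex.norm_real,
    Real.norm_of_nonneg hε.le]
  have e1 := hα.bd (Pt θ)
  have e2 := hq.lip (Pt θ) j (-ε)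
  have e3 := hα.lip (Pt θ) j (-ε)
  have e4 := hq.bd (Pt θ + Pi.single j (-ε))
  rw [abs_neg, abs_of_pos hε] at e2 e3
  have hL := hα.nonneg
  have hM := hq.nonneg
  rw [inv_mul_le_iff₀ hε]
  set x := Pt θ
  set y := x + Pi.single j (-ε)
  have : (α y : ℂ) * q y - α x * q x = ((α y - α x : ℝ) : ℂ) * q y + (α x : ℂ) * (q y - q x) := by
    push_cast; ring
  rw [this]
  refine (norm_add_le _ _).trans ?_
  rw [norm_mul, norm_mul, Complex.norm_real, Complex.norm_real]
  calc _ ≤ (L * ε) * M + L * (M * ε) := by gcongr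
    _ = _ := by ring

/-- Key commutator estimate. -/
lemma comm_lim {d : ℕ} {f α : (Fin d → ℝ) → ℝ} {L : ℝ} (hα : Nice α L)
    (ha : MemLp (fun θ => (α (Pt θ) : ℂ)) ∞ (tm d)) (hfm : MemLp (fun θ => (f (Pt θ) : ℂ)) ∞ (tm d))
    (hf : Nice f L) (j : Fin d)
    (hfα : ∀ p s, |f (p + Pi.single j s) - f p - s * α p| ≤ L * s ^ 2) (u : W d) (κ : ℝ)
    (hκ : ∀ ε > 0, ‖⟪u, mulOp (fun θ => f (Pt θ)) hfm (Aop (fun θ => α (Pt θ)) ha j ε u)⟫ -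
      ⟪u, Aop (fun θ => α (Pt θ)) ha j ε (mulOp (fun θ => f (Pt θ)) hfm u)⟫‖ ≤ κ) :
    ‖mulOp (fun θ => α (Pt θ)) ha u‖ ^ 2 ≤ κ := by
  set Ma := mulOp (fun θ => α (Pt θ)) ha with hMa
  set Mf := mulOp (fun θ => f (Pt θ)) hfm with hMf
  set A := Aop (fun θ => α (Pt θ)) ha j with hA
  have hL := hα.nonneg
  have key : ∀ ε > 0, ‖Ma u‖ ^ 2 ≤ ‖Ma (Ma u)‖ * ‖u - trOp (tau j ε) u‖ + ‖u‖ * (L * (L * ε) * ‖u‖) + κ := by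
    intro ε hε
    set T := trOp (tau j ε) u with hT
    set R := Mf (A ε u) - A ε (Mf u) + Ma (Ma T) with hR
    have hRn : ‖R‖ ≤ L * (L * ε) * ‖T‖ := by
      apply Lp.norm_le_mul_norm_of_ae_le_mul
      filter_upwards [Lp.coeFn_add (Mf (A ε u) - A ε (Mf u)) (Ma (Ma T)),
        Lp.coeFn_sub (Mf (A ε u)) (A ε (Mf u)), mulOp_coe _ hfm (A ε u),
        Aop_coe _ ha j ε u, Aop_coe _ ha j ε (Mf u), mulOp_coe _ hfm u,
        ae_shift (tau j ε) (mulOp_coe _ hfm u), mulOp_coe _ ha (Ma T), mulOp_coe _ ha T,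
        trOp_coe (tau j ε) u] with θ h1 h2 h3 h4 h5 h6 h7 h8 h9 h10
      rw [hR, h1, Pi.add_apply, h2, Pi.sub_apply, h3, h4, h5, h6, h7, h8, h9, h10, hf.shift]
      set x := Pt θ
      set z := u (θ + tau j ε)
      have e0 := hfα x ε
      have hε' : (ε : ℂ) ≠ 0 := by exact_mod_cast hε.ne'
      have : (f x : ℂ) * ((ε : ℂ)⁻¹ * ((α x : ℂ) * (z - u θ))) - (ε : ℂ)⁻¹ * ((α x : ℂ) * ((f (x + Pi.single j ε) : ℂ) * z - f x * u θ)) + α x * (α x * z)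
        = (((-ε⁻¹) * α x * (f (x + Pi.single j ε) - f x - ε * α x) : ℝ) : ℂ) * z := by
        push_cast
        field_simp
        ring
      rw [this, norm_mul, Complex.norm_real, norm_mul, norm_mul, norm_neg, norm_inv,
        Real.norm_of_nonneg hε.le]
      have e1 := hα.bd x
      refine mul_le_mul_of_nonneg_right ?_ (norm_nonneg _)
      calc ε⁻¹ * ‖α x‖ * ‖f (x + Pi.single j ε) - f x - ε * α x‖ ≤ ε⁻¹ * L * (L * ε ^ 2) := by
            gcongr
            exact e0
        _ = L * (L * ε) := by field_simp
    have hTn : ‖T‖ = ‖u‖ := LinearIsometry.norm_map _ _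
    rw [hTn] at hRn
    have h1 : ((‖Ma u‖ ^ 2 : ℝ) : ℂ) = ⟪Ma (Ma u), u - T⟫ + ⟪u, R⟫ - (⟪u, Mf (A ε u)⟫ - ⟪u, A ε (Mf u)⟫) := by
      rw [hR, inner_add_right, inner_sub_right u, inner_sub_right, hMa, mulOp_symm, mulOp_symm]
      rw [← mulOp_symm _ _ u, ← mulOp_symm _ _ u, ← mulOp_symm _ _ u, inner_self_eq_norm_sq_to_K]
      push_cast
      simp only [Complex.coe_algebraMap]
      rw [mulOp_symm _ _ (mulOp _ _ u) T]
      ring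
    have h2 : ‖Ma u‖ ^ 2 = ‖((‖Ma u‖ ^ 2 : ℝ) : ℂ)‖ := by
      rw [Complex.norm_real, Real.norm_of_nonneg (by positivity)]
    rw [h2, h1]
    refine (norm_sub_le _ _).trans (add_le_add ((norm_add_le _ _).trans (add_le_add ?_ ?_)) (hκ ε hε))
    · exact norm_inner_le_norm _ _
    · exact (norm_inner_le_norm _ _).trans (by gcongr)
  have lim : Filter.Tendsto (fun ε : ℝ => ‖Ma (Ma u)‖ * ‖u - trOp (tau j ε) u‖ + ‖u‖ * (L * (L * ε) * ‖u‖) + κ)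
      (nhdsWithin 0 (Set.Ioi 0)) (nhds (‖Ma (Ma u)‖ * ‖u - u‖ + ‖u‖ * (L * (L * 0) * ‖u‖) + κ)) := by
    refine Filter.Tendsto.mono_left ?_ nhdsWithin_le_nhds
    refine Filter.Tendsto.add (Filter.Tendsto.add ?_ ?_) tendsto_const_nhds
    · exact ((tendsto_const_nhds.sub (trOp_tendsto j u)).norm).const_mul _
    · apply Continuous.tendsto (by fun_prop : Continuous fun ε : ℝ => ‖u‖ * (L * (L * ε) * ‖u‖))
  have := ge_of_tendsto lim (by filter_upwards [self_mem_nhdsWithin] with ε hε using key ε hε)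
  simpa using this

/-! ### Local integrability of inverse squared gradient -/

lemma integrableOn_inv_sq {d : ℕ} (hd : 3 ≤ d) (p0 : Fin d → ℝ) (r : ℝ) :
    IntegrableOn (fun p : Fin d → ℝ => (‖p - p0‖ ^ 2)⁻¹) (Metric.ball p0 r) := by
  haveI : Nonempty (Fin d) := ⟨⟨0, by omega⟩⟩
  have h1 : IntegrableOn (fun x : Fin d → ℝ => (‖x‖ ^ 2)⁻¹) (Metric.ball 0 r) := by
    refine (integrableOn_fun_norm_addHaar (volume : Measure (Fin d → ℝ)) (f := fun y : ℝ => (y ^ 2)⁻¹) (r := r)).2 ?_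
    have h2 : IntegrableOn (fun y : ℝ => y ^ (d - 3)) (Set.Ioo 0 r) := by
      refine IntegrableOn.mono_set ?_ Set.Ioo_subset_Icc_self
      exact (continuous_pow _).continuousOn.integrableOn_compact isCompact_Icc
    refine h2.congr_fun (fun y hy => ?_) measurableSet_Ioo
    have hy0 : y ≠ 0 := hy.1.ne'
    simp only [Module.finrank_fin_fun, smul_eq_mul]
    have : d - 1 = (d - 3) + 2 := by omega
    rw [this, pow_add]
    field_simp
  have h3 := (measurePreserving_sub_right (volume : Measure (Fin d → ℝ)) p0).integrableOn_comp_preimage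
    (MeasurableEquiv.subRight p0).measurableEmbedding (f := fun x : Fin d → ℝ => (‖x‖ ^ 2)⁻¹) (s := Metric.ball 0 r)
  have h4 := h3.2 h1
  refine h4.mono_set ?_
  intro p hp
  simpa [dist_eq_norm] using hp

lemma continuous_pd {d : ℕ} {h : (Fin d → ℝ) → ℝ} (hC : ContDiff ℝ 2 h) (k : Fin d) :
    ContDiff ℝ 1 (pd h k) := by
  unfold pd
  exact (hC.fderiv_right (m := 1) (by norm_num)).clm_apply contDiff_const

lemma contDiff_gradSq {d : ℕ} {h : (Fin d → ℝ) → ℝ} (hC : ContDiff ℝ 2 h) :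
    ContDiff ℝ 1 (gradSq h) := by
  unfold gradSq
  exact ContDiff.sum fun k _ => (continuous_pd hC k).pow 2

lemma norm_sq_le_gradSq {d : ℕ} (h : (Fin d → ℝ) → ℝ) (p : Fin d → ℝ) :
    ‖fun j => pd h j p‖ ^ 2 ≤ gradSq h p := by
  have h0 : 0 ≤ gradSq h p := Finset.sum_nonneg fun _ _ => sq_nonneg _
  have : ‖fun j => pd h j p‖ ≤ √(gradSq h p) := by
    refine (pi_norm_le_iff_of_nonneg (Real.sqrt_nonneg _)).2 fun j => ?_
    apply Real.abs_le_sqrt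
    exact Finset.single_le_sum (f := fun k => pd h k p ^ 2) (fun _ _ => sq_nonneg _) (Finset.mem_univ j)
  calc _ ≤ √(gradSq h p) ^ 2 := by gcongr
    _ = _ := Real.sq_sqrt h0

lemma lower_bound {d : ℕ} {h : (Fin d → ℝ) → ℝ} (hC : ContDiff ℝ 2 h) (hM : IsMorse h)
    (p0 : Fin d → ℝ) (h0 : gradSq h p0 = 0) :
    ∃ c > 0, ∀ᶠ p in nhds p0, c * ‖p - p0‖ ^ 2 ≤ gradSq h p := by
  have hz : ∀ j, pd h j p0 = 0 := by
    intro j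
    have := (Finset.sum_eq_zero_iff_of_nonneg (fun k _ => sq_nonneg (pd h k p0))).1 h0 j (Finset.mem_univ j)
    exact pow_eq_zero_iff (two_ne_zero) |>.1 this
  have hf : fderiv ℝ h p0 = 0 := by
    apply ContinuousLinearMap.coe_injective
    refine LinearMap.pi_ext' fun j => ?_
    ext
    simpa [pd] using hz j
  have hdet := hM p0 hf
  set v : (Fin d → ℝ) → (Fin d → ℝ) := fun p j => pd h j p with hv
  set D : (Fin d → ℝ) →L[ℝ] (Fin d → ℝ) := ContinuousLinearMap.pi fun j => fderiv ℝ (pd h j) p0 with hD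
  have hvD : HasFDerivAt v D p0 := by
    rw [hasFDerivAt_pi]
    intro j
    exact ((continuous_pd hC j).differentiable (by norm_num) p0).hasFDerivAt
  have hinj : LinearMap.ker (D : (Fin d → ℝ) →ₗ[ℝ] (Fin d → ℝ)) = ⊥ := by
    rw [LinearMap.ker_eq_bot']
    intro w hw
    apply Matrix.eq_zero_of_vecMul_eq_zero hdet
    ext j
    have h1 : D w j = 0 := congrFun hw j
    refine Eq.trans ?_ h1
    simp only [Matrix.vecMul, dotProduct, hess, Matrix.of_apply, hD, ContinuousLinearMap.pi_apply]
    conv_rhs => rw [pi_eq_sum_univ' w]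
    rw [map_sum]
    simp only [map_smul, smul_eq_mul]
    rfl
  obtain ⟨K, hK, hanti⟩ := LinearMap.exists_antilipschitzWith _ hinj
  have hKr : (0:ℝ) < K := hK
  refine ⟨(1 / (2 * K)) ^ 2, by positivity, ?_⟩
  have := hvD.isLittleO.def (c := 1 / (2 * K)) (by positivity)
  filter_upwards [this] with p hp
  have h1 : ‖p - p0‖ ≤ K * ‖D (p - p0)‖ := by
    have := hanti.le_mul_dist (p - p0) 0
    simpa using this
  have hv0 : v p0 = 0 := by ext j; exact hz j
  rw [hv0, sub_zero] at hp
  have h2 : ‖D (p - p0)‖ ≤ ‖v p‖ + ‖v p - D (p - p0)‖ := by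
    have := norm_sub_le (v p) (v p - D (p - p0))
    simpa using this
  have h3 : 1 / (2 * K) * ‖p - p0‖ ≤ ‖v p‖ := by
    have h4 : ‖p - p0‖ / K ≤ ‖D (p - p0)‖ := by rw [div_le_iff₀ hKr]; linarith
    have h5 : ‖p - p0‖ / K = 1 / (2 * K) * ‖p - p0‖ + 1 / (2 * K) * ‖p - p0‖ := by field_simp; ring
    linarith
  calc _ = (1 / (2 * K) * ‖p - p0‖) ^ 2 := by ring
    _ ≤ ‖v p‖ ^ 2 := by gcongr
    _ ≤ _ := norm_sq_le_gradSq h p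

lemma gradSq_nonneg {d : ℕ} (h : (Fin d → ℝ) → ℝ) (p : Fin d → ℝ) : 0 ≤ gradSq h p :=
  Finset.sum_nonneg fun _ _ => sq_nonneg _

lemma locInt {d : ℕ} (hd : 3 ≤ d) {h : (Fin d → ℝ) → ℝ} (hC : ContDiff ℝ 2 h) (hM : IsMorse h) :
    LocallyIntegrable (fun p => (gradSq h p)⁻¹) volume := by
  have hcont : Continuous (gradSq h) := (contDiff_gradSq hC).continuous
  intro p0
  by_cases h0 : gradSq h p0 = 0
  · obtain ⟨c, hc, hev⟩ := lower_bound hC hM p0 h0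
    obtain ⟨r, hr, hball⟩ := Metric.eventually_nhds_iff_ball.1 hev
    refine ⟨Metric.ball p0 r, Metric.ball_mem_nhds _ hr, ?_⟩
    refine Integrable.mono' ((integrableOn_inv_sq hd p0 r).const_mul c⁻¹) ?_ ?_
    · exact (hcont.measurable.inv).aestronglyMeasurable
    · have hne : ∀ᵐ p ∂(volume : Measure (Fin d → ℝ)), p ≠ p0 := by
        haveI : Nonempty (Fin d) := ⟨⟨0, by omega⟩⟩
        exact Measure.ae_ne volume p0
      filter_upwards [ae_restrict_mem measurableSet_ball, ae_restrict_of_ae hne] with p hp hpne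
      have h1 := hball p hp
      have h2 : 0 < ‖p - p0‖ := norm_pos_iff.2 (sub_ne_zero.2 hpne)
      rw [Real.norm_of_nonneg (inv_nonneg.2 (gradSq_nonneg h p)), ← mul_inv]
      exact inv_anti₀ (by positivity) h1
  · have hct : ContinuousAt (fun p => (gradSq h p)⁻¹) p0 := hcont.continuousAt.inv₀ h0
    exact Filter.Tendsto.integrableAtFilter
      (hcont.measurable.inv).stronglyMeasurable.stronglyMeasurableAtFilter
      (Measure.finiteAt_nhds volume p0) hct

lemma ae_ne_zero {d : ℕ} (hd : 3 ≤ d) {h : (Fin d → ℝ) → ℝ} (hC : ContDiff ℝ 2 h) (hM : IsMorse h) :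
    ∀ᵐ p ∂(volume : Measure (Fin d → ℝ)), gradSq h p ≠ 0 := by
  haveI : Nonempty (Fin d) := ⟨⟨0, by omega⟩⟩
  rw [ae_iff]
  refine measure_null_of_locally_null _ fun p0 hp0 => ?_
  have h0 : gradSq h p0 = 0 := by simpa using hp0
  obtain ⟨c, hc, hev⟩ := lower_bound hC hM p0 h0
  refine ⟨{p | ¬ gradSq h p ≠ 0} ∩ {p | c * ‖p - p0‖ ^ 2 ≤ gradSq h p}, Filter.inter_mem self_mem_nhdsWithin (nhdsWithin_le_nhds hev), ?_⟩
  refine measure_mono_null (t := {p0}) ?_ (measure_singleton _)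
  rintro p ⟨h1, h2⟩
  have h1 : gradSq h p = 0 := by simpa using h1
  have h2 : c * ‖p - p0‖ ^ 2 ≤ gradSq h p := h2
  rw [h1] at h2
  have h3 : ‖p - p0‖ ^ 2 ≤ 0 := by
    by_contra hcon
    push Not at hcon
    nlinarith [mul_pos hc hcon]
  have h4 : ‖p - p0‖ = 0 := by
    have := sq_nonneg ‖p - p0‖
    exact pow_eq_zero_iff two_ne_zero |>.1 (le_antisymm h3 this)
  exact sub_eq_zero.1 (norm_eq_zero.1 h4)

/-! ### Periodic functions -/

lemma per_bdd {d : ℕ} {E : Type*} [NormedAddCommGroup E] {q : (Fin d → ℝ) → E} (hq : Continuous q)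
    (hper : ∀ (p : Fin d → ℝ) (m : Γd d), q (p + fun i => 2 * π * (m i : ℝ)) = q p) :
    ∃ M, ∀ p, ‖q p‖ ≤ M := by
  have hK : IsCompact (Set.univ.pi fun _ : Fin d => Set.Icc (0:ℝ) (2 * π)) :=
    isCompact_univ_pi fun _ => isCompact_Icc
  obtain ⟨M, hM⟩ := hK.exists_bound_of_continuousOn hq.continuousOn
  refine ⟨M, fun p => ?_⟩
  have hpi : 0 < 2 * π := by positivity
  have h1 := hper (fun i => p i - 2 * π * (⌊p i / (2 * π)⌋ : ℝ)) (fun i => ⌊p i / (2 * π)⌋)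
  have h2 : ((fun i => p i - 2 * π * (⌊p i / (2 * π)⌋ : ℝ)) + fun i => 2 * π * ((⌊p i / (2 * π)⌋ : ℤ) : ℝ)) = p := by
    ext i; simp
  rw [h2] at h1
  rw [h1]
  apply hM
  intro i _
  have e1 := Int.floor_le (p i / (2 * π))
  have e2 := Int.lt_floor_add_one (p i / (2 * π))
  rw [le_div_iff₀ hpi] at e1
  rw [div_lt_iff₀ hpi] at e2
  constructor
  · show 0 ≤ p i - 2 * π * (⌊p i / (2 * π)⌋ : ℝ)
    linarith
  · show p i - 2 * π * (⌊p i / (2 * π)⌋ : ℝ) ≤ 2 * π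
    linarith

lemma per_fderiv {d : ℕ} {q : (Fin d → ℝ) → ℝ} (hper : Periodic2pi q) (p : Fin d → ℝ) (m : Γd d) :
    fderiv ℝ q (p + fun i => 2 * π * (m i : ℝ)) = fderiv ℝ q p := by
  rw [← fderiv_comp_add_right]
  congr 1
  ext p
  exact hper p m

lemma per_pd {d : ℕ} {q : (Fin d → ℝ) → ℝ} (hper : Periodic2pi q) (k : Fin d) : Periodic2pi (pd q k) := by
  intro p m
  unfold pd
  rw [per_fderiv hper]

lemma per_gradSq {d : ℕ} {q : (Fin d → ℝ) → ℝ} (hper : Periodic2pi q) : Periodic2pi (gradSq q) := by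
  intro p m
  unfold gradSq
  exact Finset.sum_congr rfl fun k _ => by rw [per_pd hper k p m]

lemma Nice.mono {d : ℕ} {E : Type*} [NormedAddCommGroup E] {q : (Fin d → ℝ) → E} {M M' : ℝ}
    (h : Nice q M) (hM : M ≤ M') : Nice q M' :=
  ⟨h.per, fun p => (h.bd p).trans hM, fun p j s => (h.lip p j s).trans (by gcongr)⟩

lemma exists_nice {d : ℕ} {q : (Fin d → ℝ) → ℝ} (hC : ContDiff ℝ 1 q) (hper : Periodic2pi q) :
    ∃ L, Nice q L := by
  obtain ⟨M1, h1⟩ := per_bdd hC.continuous hper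
  obtain ⟨M2, h2⟩ := per_bdd (hC.continuous_fderiv (by norm_num)) (per_fderiv hper)
  refine ⟨max M1 M2, hper, fun p => (h1 p).trans (le_max_left _ _), fun p j s => ?_⟩
  have := convex_univ.norm_image_sub_le_of_norm_fderiv_le (𝕜 := ℝ) (f := q) (C := M2)
    (fun x _ => hC.differentiable (by norm_num) x) (fun x _ => h2 x) (Set.mem_univ p) (Set.mem_univ (p + Pi.single j s))
  rw [add_sub_cancel_left, Pi.norm_single, Real.norm_eq_abs s] at this
  refine this.trans ?_
  gcongr
  exact le_max_right _ _

lemma taylor2 {d : ℕ} {f : (Fin d → ℝ) → ℝ} (hC : ContDiff ℝ 1 f) (j : Fin d) {L : ℝ}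
    (hL : Nice (pd f j) L) (p : Fin d → ℝ) (s : ℝ) :
    |f (p + Pi.single j s) - f p - s * pd f j p| ≤ L * s ^ 2 := by
  have hder : ∀ t : ℝ, HasDerivAt (fun t : ℝ => f (p + Pi.single j t) - t * pd f j p)
      (pd f j (p + Pi.single j t) - pd f j p) t := by
    intro t
    have h1 : HasDerivAt (fun t : ℝ => p + (Pi.single j t : Fin d → ℝ)) (Pi.single j 1) t := by
      have := (hasDerivAt_id t).smul_const (Pi.single j 1 : Fin d → ℝ)
      have h3 := this.const_add p
      have e1 : (fun t : ℝ => p + (Pi.single j t : Fin d → ℝ)) = fun x : ℝ => p + id x • (Pi.single j 1 : Fin d → ℝ) := by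
        funext x
        simp [← Pi.single_smul]
      rw [e1]
      rw [one_smul] at h3
      exact h3
    have h2 := ((hC.differentiable (by norm_num) (p + Pi.single j t)).hasFDerivAt).comp_hasDerivAt t h1
    have h3 := (hasDerivAt_id t).mul_const (pd f j p)
    have h4 := h2.sub h3
    rw [one_mul] at h4
    exact h4
  have := (convex_uIcc (0:ℝ) s).norm_image_sub_le_of_norm_hasDerivWithin_le (C := L * |s|)
    (fun t _ => (hder t).hasDerivWithinAt) (fun t ht => ?_) Set.left_mem_uIcc Set.right_mem_uIcc
  · simp only [Pi.single_zero, add_zero, zero_mul, sub_zero, Real.norm_eq_abs] at this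
    calc _ = |f (p + Pi.single j s) - s * pd f j p - f p| := by congr 1; ring
      _ ≤ _ := this
      _ = L * s ^ 2 := by rw [mul_assoc, abs_mul_abs_self]; ring
  · refine (hL.lip p j t).trans ?_
    have : |t| ≤ |s| := by
      have := Set.abs_sub_left_of_mem_uIcc ht
      simpa using this
    have := hL.nonneg
    gcongr

lemma Nice.ofReal {d : ℕ} {q : (Fin d → ℝ) → ℝ} {M : ℝ} (h : Nice q M) :
    Nice (fun p => (q p : ℂ)) M :=
  ⟨fun p m => by rw [h.per], fun p => by rw [Complex.norm_real]; exact h.bd p,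
    fun p j s => by rw [← Complex.ofReal_sub, Complex.norm_real]; exact h.lip p j s⟩

lemma Nice.add {d : ℕ} {E : Type*} [NormedAddCommGroup E] {q q' : (Fin d → ℝ) → E} {M M' : ℝ}
    (h : Nice q M) (h' : Nice q' M') : Nice (fun p => q p + q' p) (M + M') := by
  refine ⟨fun p m => by rw [h.per, h'.per], fun p => norm_add_le_of_le (h.bd p) (h'.bd p), fun p j s => ?_⟩
  rw [add_sub_add_comm, add_mul]
  exact norm_add_le_of_le (h.lip p j s) (h'.lip p j s)

lemma Nice.mul {d : ℕ} {q q' : (Fin d → ℝ) → ℂ} {M M' : ℝ}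
    (h : Nice q M) (h' : Nice q' M') : Nice (fun p => q p * q' p) (2 * M * M') := by
  have h0 := h.nonneg
  have h0' := h'.nonneg
  refine ⟨fun p m => by rw [h.per, h'.per], fun p => ?_, fun p j s => ?_⟩
  · rw [norm_mul]
    have := mul_le_mul (h.bd p) (h'.bd p) (norm_nonneg _) h0
    nlinarith [mul_nonneg h0 h0']
  · have : q (p + Pi.single j s) * q' (p + Pi.single j s) - q p * q' p =
      q (p + Pi.single j s) * (q' (p + Pi.single j s) - q' p) + (q (p + Pi.single j s) - q p) * q' p := by ring
    rw [this]
    refine (norm_add_le _ _).trans ?_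
    rw [norm_mul, norm_mul]
    have e1 := mul_le_mul (h.bd (p + Pi.single j s)) (h'.lip p j s) (norm_nonneg _) h0
    have e2 := mul_le_mul (h.lip p j s) (h'.bd p) (norm_nonneg _) (by positivity)
    linarith

lemma Nice.const_mul {d : ℕ} {q : (Fin d → ℝ) → ℂ} {M : ℝ}
    (h : Nice q M) (c : ℂ) : Nice (fun p => c * q p) (‖c‖ * M) := by
  refine ⟨fun p m => by rw [h.per], fun p => ?_, fun p j s => ?_⟩
  · rw [norm_mul]; gcongr; exact h.bd p
  · rw [← mul_sub, norm_mul, mul_assoc]; gcongr; exact h.lip p j s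

lemma Nice.sum {d : ℕ} {ι : Type*} (t : Finset ι) {q : ι → (Fin d → ℝ) → ℂ} {M : ι → ℝ}
    (h : ∀ k, Nice (q k) (M k)) : Nice (fun p => ∑ k ∈ t, q k p) (∑ k ∈ t, M k) := by
  refine ⟨fun p m => Finset.sum_congr rfl fun k _ => (h k).per p m,
    fun p => norm_sum_le_of_le _ fun k _ => (h k).bd p, fun p j s => ?_⟩
  rw [← Finset.sum_sub_distrib, Finset.sum_mul]
  exact norm_sum_le_of_le _ fun k _ => (h k).lip p j s

lemma abs_le_lnorm {d : ℕ} (x : Γd d) (k : Fin d) : |(x k : ℝ)| ≤ lnorm x := by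
  unfold lnorm
  apply Real.abs_le_sqrt
  exact Finset.single_le_sum (f := fun k => ((x k : ℝ)) ^ 2) (fun _ _ => sq_nonneg _) (Finset.mem_univ k)

lemma lnorm_nonneg {d : ℕ} (x : Γd d) : 0 ≤ lnorm x := Real.sqrt_nonneg _

lemma nice_exp {d : ℕ} (x : Γd d) :
    Nice (fun p : Fin d → ℝ => Complex.exp (-(Complex.I * (dotZ p x : ℝ)))) (1 + lnorm x) := by
  have hx := lnorm_nonneg x
  have hre : ∀ r : ℝ, -(Complex.I * (r : ℂ)) = ((-r : ℝ) : ℂ) * Complex.I := by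
    intro r; push_cast; ring
  refine ⟨fun p m => ?_, fun p => ?_, fun p j s => ?_⟩
  · have : dotZ (p + fun i => 2 * π * (m i : ℝ)) x = dotZ p x + 2 * π * ((∑ i, m i * x i : ℤ) : ℝ) := by
      simp only [dotZ, Pi.add_apply, add_mul, Finset.sum_add_distrib]
      push_cast
      rw [Finset.mul_sum]
      simp only [mul_assoc]
    rw [this, Complex.exp_eq_exp_iff_exists_int]
    refine ⟨-(∑ i, m i * x i), ?_⟩
    push_cast
    ring
  · rw [hre, Complex.norm_exp_ofReal_mul_I]; linarith
  · have : dotZ (p + Pi.single j s) x = dotZ p x + s * x j := by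
      simp only [dotZ, Pi.add_apply, add_mul, Finset.sum_add_distrib]
      congr 1
      simp [Pi.single_apply]
    rw [this, hre, hre]
    have h2 : ((-(dotZ p x + s * (x j : ℝ)) : ℝ) : ℂ) * Complex.I = ((-(dotZ p x) : ℝ) : ℂ) * Complex.I
      + Complex.I * ((-(s * (x j : ℝ)) : ℝ) : ℂ) := by push_cast; ring
    rw [h2, Complex.exp_add]
    have h3 : ∀ a b : ℂ, a * b - a = a * (b - 1) := by intros; ring
    rw [h3, norm_mul, Complex.norm_exp_ofReal_mul_I, one_mul]
    refine (Real.norm_exp_I_mul_ofReal_sub_one_le).trans ?_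
    rw [Real.norm_eq_abs, abs_neg, abs_mul, mul_comm]
    have := abs_le_lnorm x j
    gcongr
    linarith

lemma nice_ghat {d : ℕ} {e : (Fin d → ℝ) → ℝ} {L : ℝ} (h1 : ∀ k, Nice (pd e k) L)
    (h2 : Nice (gradSq e) L) (x : Γd d) :
    Nice (ghat e x) (2 * (d + 1) * L * (1 + lnorm x) ^ 2) := by
  have hx := lnorm_nonneg x
  have hL := h2.nonneg
  have e1 : Nice (fun p => ∑ k, (x k : ℂ) * (pd e k p : ℂ)) (∑ k, ‖(x k : ℂ)‖ * L) :=
    Nice.sum _ fun k => ((h1 k).ofReal).const_mul _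
  have e2 := h2.ofReal.const_mul (Complex.I / 2)
  have e3 := (e2.add e1).mul (nice_exp x)
  have e4 : (fun p => (Complex.I / 2 * ((gradSq e p : ℝ) : ℂ) + ∑ k, (x k : ℂ) * (pd e k p : ℂ)) * Complex.exp (-(Complex.I * (dotZ p x : ℝ)))) = ghat e x := by
    funext p
    unfold ghat
    push_cast
    simp only [mul_comm]
  rw [e4] at e3
  refine e3.mono ?_
  have e5 : ∑ k, ‖(x k : ℂ)‖ * L ≤ d * (L * lnorm x) := by
    calc _ ≤ ∑ k : Fin d, L * lnorm x := by
          refine Finset.sum_le_sum fun k _ => ?_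
          rw [mul_comm]
          gcongr
          rw [Complex.norm_intCast]
          exact abs_le_lnorm x k
      _ = _ := by simp
  have e6 : ‖Complex.I / 2‖ * L ≤ L := by
    simp; linarith
  have e7 : ‖Complex.I / 2‖ * L + ∑ k, ‖(x k : ℂ)‖ * L ≤ (d + 1) * L * (1 + lnorm x) := by
    have : (0:ℝ) ≤ d := Nat.cast_nonneg d
    nlinarith [mul_nonneg hL hx, mul_nonneg this hL]
  calc _ ≤ 2 * ((d + 1) * L * (1 + lnorm x)) * (1 + lnorm x) := by gcongr
    _ = _ := by ring

lemma memLp_comp_Pt {d : ℕ} {q : (Fin d → ℝ) → ℝ} (hq : Continuous q) {M : ℝ} (h : Nice q M) :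
    MemLp (fun θ => (q (Pt θ) : ℂ)) ∞ (tm d) := by
  refine memLp_top_of_bound (C := M) ?_ (Filter.Eventually.of_forall fun θ => ?_)
  · exact (Complex.measurable_ofReal.comp (hq.measurable.comp (mp_Pt d).measurable)).aestronglyMeasurable
  · rw [Complex.norm_real]; exact h.bd _

/-! ### The weighted Cauchy-Schwarz bound -/

lemma norm_sq_eq {d : ℕ} (w : W d) : ‖w‖ ^ 2 = ∫ θ, ‖w θ‖ ^ 2 ∂(tm d) := by
  have h : ((‖w‖ ^ 2 : ℝ) : ℂ) = ((∫ θ, ‖w θ‖ ^ 2 ∂(tm d) : ℝ) : ℂ) := by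
    push_cast
    rw [← integral_complex_ofReal]
    have := inner_self_eq_norm_sq_to_K (𝕜 := ℂ) w
    rw [L2.inner_def] at this
    refine Eq.trans this.symm (integral_congr_ae (Filter.Eventually.of_forall fun θ => ?_))
    show ⟪w θ, w θ⟫ = _
    rw [inner_self_eq_norm_sq_to_K (𝕜 := ℂ)]
    push_cast
    rfl
  exact_mod_cast h

lemma integrable_sq' {d : ℕ} (w : W d) : Integrable (fun θ => ‖w θ‖ ^ 2) (tm d) :=
  (Lp.memLp w).integrable_norm_pow two_ne_zero

def Nsq {d : ℕ} (h : (Fin d → ℝ) → ℝ) (hm : ∀ j, MemLp (fun θ => (pd h j (Pt θ) : ℂ)) ∞ (tm d))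
    (u : W d) : ℝ := ∑ j, ‖mulOp (fun θ => pd h j (Pt θ)) (hm j) u‖ ^ 2

def Kc {d : ℕ} (h : (Fin d → ℝ) → ℝ) : ℝ := ∫ θ, (gradSq h (Pt θ))⁻¹ ∂(tm d)

lemma Kc_nonneg {d : ℕ} (h : (Fin d → ℝ) → ℝ) : 0 ≤ Kc h :=
  integral_nonneg fun θ => inv_nonneg.2 (gradSq_nonneg h _)

lemma int_inv {d : ℕ} (hd : 3 ≤ d) {h : (Fin d → ℝ) → ℝ} (hC : ContDiff ℝ 2 h) (hM : IsMorse h) :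
    Integrable (fun θ => (gradSq h (Pt θ))⁻¹) (tm d) := by
  have h1 : IntegrableOn (fun p => (gradSq h p)⁻¹) (torusBox d) volume :=
    (locInt hd hC hM).integrableOn_isCompact (isCompact_univ_pi fun _ => isCompact_Icc)
  have h2 : Integrable (fun p => (gradSq h p)⁻¹)
    (ENNReal.ofReal ((2 * π) ^ d)⁻¹ • (volume.restrict (torusBox d))) :=
    Integrable.smul_measure h1 ENNReal.ofReal_ne_top
  exact (mp_Pt d).integrable_comp_of_integrable h2

lemma ae_ne {d : ℕ} (hd : 3 ≤ d) {h : (Fin d → ℝ) → ℝ} (hC : ContDiff ℝ 2 h) (hM : IsMorse h) :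
    ∀ᵐ θ ∂(tm d), gradSq h (Pt θ) ≠ 0 := by
  have h1 := ae_restrict_of_ae (s := torusBox d) (ae_ne_zero hd hC hM)
  have h2 := Measure.ae_smul_measure h1 (ENNReal.ofReal ((2 * π) ^ d)⁻¹)
  exact (mp_Pt d).quasiMeasurePreserving.ae h2

lemma Nsq_eq {d : ℕ} (h : (Fin d → ℝ) → ℝ) (hm : ∀ j, MemLp (fun θ => (pd h j (Pt θ) : ℂ)) ∞ (tm d))
    (u : W d) : Integrable (fun θ => gradSq h (Pt θ) * ‖u θ‖ ^ 2) (tm d) ∧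
      Nsq h hm u = ∫ θ, gradSq h (Pt θ) * ‖u θ‖ ^ 2 ∂(tm d) := by
  have hae : (fun θ => ∑ j, ‖mulOp (fun θ => pd h j (Pt θ)) (hm j) u θ‖ ^ 2) =ᵐ[tm d]
      fun θ => gradSq h (Pt θ) * ‖u θ‖ ^ 2 := by
    have := ae_all_iff.2 fun j => mulOp_coe (fun θ => pd h j (Pt θ)) (hm j) u
    filter_upwards [this] with θ hθ
    unfold gradSq
    rw [Finset.sum_mul]
    refine Finset.sum_congr rfl fun j _ => ?_
    rw [hθ j, norm_mul, Complex.norm_real, mul_pow, Real.norm_eq_abs, sq_abs]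
  have hi : Integrable (fun θ => ∑ j, ‖mulOp (fun θ => pd h j (Pt θ)) (hm j) u θ‖ ^ 2) (tm d) :=
    integrable_finsetSum _ fun j _ => integrable_sq' _
  refine ⟨hi.congr hae, ?_⟩
  rw [← integral_congr_ae hae, integral_finsetSum _ fun j _ => integrable_sq' _]
  exact Finset.sum_congr rfl fun j _ => norm_sq_eq _

lemma Nsq_nonneg {d : ℕ} (h : (Fin d → ℝ) → ℝ) (hm : ∀ j, MemLp (fun θ => (pd h j (Pt θ) : ℂ)) ∞ (tm d))
    (u : W d) : 0 ≤ Nsq h hm u := Finset.sum_nonneg fun _ _ => sq_nonneg _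

lemma pair_bd {d : ℕ} (hd : 3 ≤ d) {h : (Fin d → ℝ) → ℝ} (hC : ContDiff ℝ 2 h) (hM : IsMorse h)
    (hm : ∀ j, MemLp (fun θ => (pd h j (Pt θ) : ℂ)) ∞ (tm d)) (u v : W d) {M : ℝ} (hM0 : 0 ≤ M)
    (hv : ∀ᵐ θ ∂(tm d), ‖v θ‖ ≤ M) : ‖⟪v, u⟫‖ ≤ M * √(Kc h * Nsq h hm u) := by
  have hcont : Continuous (gradSq h) := (contDiff_gradSq hC).continuous
  have hgm : Measurable (fun θ : Tor d => gradSq h (Pt θ)) := hcont.measurable.comp (mp_Pt d).measurable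
  have hum : AEStronglyMeasurable (fun θ => ‖u θ‖) (tm d) := (Lp.aestronglyMeasurable u).norm
  have hui : Integrable (fun θ => ‖u θ‖) (tm d) := ((Lp.memLp u).integrable (by norm_num)).norm
  set F : Tor d → ℝ := fun θ => √((gradSq h (Pt θ))⁻¹) with hF
  set G : Tor d → ℝ := fun θ => √(gradSq h (Pt θ)) * ‖u θ‖ with hG
  have hFsq : ∀ θ, F θ ^ 2 = (gradSq h (Pt θ))⁻¹ := fun θ =>
    Real.sq_sqrt (inv_nonneg.2 (gradSq_nonneg h _))
  have hGsq : ∀ θ, G θ ^ 2 = gradSq h (Pt θ) * ‖u θ‖ ^ 2 := fun θ => by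
    rw [hG, mul_pow, Real.sq_sqrt (gradSq_nonneg h _)]
  have hFm : MemLp F 2 (tm d) := by
    refine (memLp_two_iff_integrable_sq ?_).2 ?_
    · exact (hgm.inv.sqrt).aestronglyMeasurable
    · simp only [hFsq]; exact int_inv hd hC hM
  have hGm : MemLp G 2 (tm d) := by
    refine (memLp_two_iff_integrable_sq ?_).2 ?_
    · exact (hgm.sqrt).aestronglyMeasurable.mul hum
    · simp only [hGsq]; exact (Nsq_eq h hm u).1
  have hFG : (fun θ => ‖u θ‖) =ᵐ[tm d] fun θ => F θ * G θ := by
    filter_upwards [ae_ne hd hC hM] with θ hθ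
    have h0 : 0 < gradSq h (Pt θ) := lt_of_le_of_ne (gradSq_nonneg h _) hθ.symm
    simp only [hF, hG]
    rw [← mul_assoc, ← Real.sqrt_mul (inv_nonneg.2 h0.le), inv_mul_cancel₀ hθ, Real.sqrt_one, one_mul]
  have hCS := integral_mul_le_Lp_mul_Lq_of_nonneg (μ := tm d) (p := 2) (q := 2) (f := F) (g := G)
    Real.HolderConjugate.two_two (Filter.Eventually.of_forall fun θ => Real.sqrt_nonneg _)
    (Filter.Eventually.of_forall fun θ => by positivity)
    (by simpa using hFm) (by simpa using hGm)
  simp only [Real.rpow_two, hFsq, hGsq] at hCS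
  rw [← (Nsq_eq h hm u).2, ← Real.sqrt_eq_rpow, ← Real.sqrt_eq_rpow] at hCS
  have h1 : ‖⟪v, u⟫‖ ≤ ∫ θ, M * ‖u θ‖ ∂(tm d) := by
    rw [L2.inner_def]
    refine norm_integral_le_of_norm_le (hui.const_mul M) ?_
    filter_upwards [hv] with θ hθ
    exact (norm_inner_le_norm _ _).trans (by gcongr)
  rw [integral_const_mul, integral_congr_ae hFG] at h1
  refine h1.trans ?_
  gcongr
  rw [Real.sqrt_mul (Kc_nonneg h)]
  exact hCS

lemma fb_bd {d : ℕ} (x : Γd d) : ∀ᵐ θ ∂(tm d), ‖fb d x θ‖ ≤ 1 := by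
  filter_upwards [fb_apply x] with θ hθ
  rw [hθ]
  have : -(Complex.I * ((dotZ (Pt θ) x : ℝ) : ℂ)) = ((-(dotZ (Pt θ) x) : ℝ) : ℂ) * Complex.I := by push_cast; ring
  rw [this, Complex.norm_exp_ofReal_mul_I]

lemma eq_zero_of_Nsq {d : ℕ} (hd : 3 ≤ d) {h : (Fin d → ℝ) → ℝ} (hC : ContDiff ℝ 2 h) (hM : IsMorse h)
    (hm : ∀ j, MemLp (fun θ => (pd h j (Pt θ) : ℂ)) ∞ (tm d)) (u : W d) (h0 : Nsq h hm u = 0) : u = 0 := by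
  apply (fb d).repr.injective
  ext x
  rw [(fb d).repr_apply_apply]
  have := pair_bd hd hC hM hm u (fb d x) zero_le_one (fb_bd x)
  rw [h0] at this
  simp at this
  simp [this]

/-! ### Transport to the torus -/

lemma integral_Pt {d : ℕ} {F : (Fin d → ℝ) → ℂ} (hF : Continuous F) :
    ∫ θ, F (Pt θ) ∂(tm d) = ((1 / (2 * π) ^ d : ℝ) : ℂ) * ∫ p in torusBox d, F p := by
  have h1 := integral_map (μ := tm d) (φ := Pt (d := d)) (mp_Pt d).measurable.aemeasurable
    (f := F) hF.aestronglyMeasurable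
  rw [← h1, (mp_Pt d).map_eq, integral_smul_measure, ENNReal.toReal_ofReal (by positivity)]
  rw [Complex.real_smul, one_div]

lemma continuous_dotZ {d : ℕ} (x : Γd d) : Continuous (fun p : Fin d → ℝ => dotZ p x) := by
  unfold dotZ; fun_prop

lemma repr_fb {d : ℕ} (x : Γd d) : (fb d).repr (fb d x) = delta x := by
  rw [HilbertBasis.repr_self]
  rfl

lemma continuous_ghat {d : ℕ} {e : (Fin d → ℝ) → ℝ} (hC : ContDiff ℝ 2 e) (x : Γd d) :
    Continuous (ghat e x) := by
  unfold ghat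
  have h1 := (contDiff_gradSq hC).continuous
  have h2 : ∀ k, Continuous (pd e k) := fun k => (continuous_pd hC k).continuous
  have h3 := continuous_dotZ x
  fun_prop

lemma conj_exp (r : ℝ) : (starRingEnd ℂ) (Complex.exp (-(Complex.I * (r : ℂ)))) = Complex.exp (Complex.I * (r : ℂ)) := by
  rw [← Complex.exp_conj]
  simp

lemma gvec_coe {d : ℕ} {e : (Fin d → ℝ) → ℝ} (hC : ContDiff ℝ 2 e) {M : ℝ} (x : Γd d)
    (hn : Nice (ghat e x) M) {g : Γd d → L2 d} (hg : IsGVec e g) :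
    ((fb d).repr.symm (g x) : W d) =ᵐ[tm d] fun θ => ghat e x (Pt θ) := by
  have hmem : MemLp (fun θ => ghat e x (Pt θ)) 2 (tm d) := by
    refine MemLp.of_bound (C := M) ?_ (Filter.Eventually.of_forall fun θ => hn.bd _)
    exact ((continuous_ghat hC x).measurable.comp (mp_Pt d).measurable).aestronglyMeasurable
  have key : (fb d).repr.symm (g x) = hmem.toLp := by
    rw [LinearIsometryEquiv.symm_apply_eq]
    ext m
    rw [hg x m, (fb d).repr_apply_apply, L2.inner_def, ← integral_Pt]
    · refine integral_congr_ae ?_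
      filter_upwards [fb_apply m, hmem.coeFn_toLp] with θ h1 h2
      rw [h1, h2]
      rw [RCLike.inner_apply, conj_exp]
    · have h1 := continuous_ghat hC x
      have h3 := continuous_dotZ m
      fun_prop
  rw [key]
  exact hmem.coeFn_toLp

lemma mult_eq {d : ℕ} {f : (Fin d → ℝ) → ℝ} (hf : Continuous f)
    (hm : MemLp (fun θ => (f (Pt θ) : ℂ)) ∞ (tm d)) {G : L2 d →L[ℂ] L2 d} (hG : IsMultiplier f G) (u : W d) :
    (fb d).repr.symm (G ((fb d).repr u)) = mulOp (fun θ => f (Pt θ)) hm u := by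
  let T : W d →L[ℂ] W d :=
    ((fb d).repr.symm : L2 d →L[ℂ] W d).comp (G.comp ((fb d).repr : W d →L[ℂ] L2 d))
  have hT : ∀ u, T u = (fb d).repr.symm (G ((fb d).repr u)) := fun u => rfl
  rw [← hT]
  have : T = mulOp (fun θ => f (Pt θ)) hm := by
    refine ContinuousLinearMap.ext_on (s := Set.range (fb d)) ?_ ?_
    · have := (fb d).dense_span
      rw [← Submodule.dense_iff_topologicalClosure_eq_top] at this
      exact this
    · rintro _ ⟨y, rfl⟩
      apply (fb d).repr.injective
      ext x
      rw [(fb d).repr_apply_apply, (fb d).repr_apply_apply, hT]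
      rw [← LinearIsometryEquiv.inner_map_map (fb d).repr, LinearIsometryEquiv.apply_symm_apply,
        repr_fb, repr_fb, hG x y, fCoeff, ← integral_Pt, L2.inner_def]
      · refine integral_congr_ae ?_
        filter_upwards [fb_apply x, fb_apply y, mulOp_coe _ hm (fb d y)] with θ h1 h2 h3
        rw [h1, h3, h2, RCLike.inner_apply, conj_exp, mul_assoc, ← Complex.exp_add]
        congr 2
        have : dotZ (Pt θ) (x - y) = dotZ (Pt θ) x - dotZ (Pt θ) y := by
          simp [dotZ, mul_sub, Finset.sum_sub_distrib]
        rw [this]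
        push_cast
        ring
      · have h3 := continuous_dotZ (x - y)
        fun_prop
  rw [this]

lemma comm_sum {d : ℕ} {V : Γd d → ℝ} {g : Γd d → L2 d} {C : L2 d →L[ℂ] L2 d} (hC : IsCommOp V g C) (u : W d) :
    HasSum (fun x => (Complex.I * (V x : ℂ)) •
      (⟪(fb d).repr.symm (g x), u⟫ • fb d x - ⟪fb d x, u⟫ • (fb d).repr.symm (g x)))
      ((fb d).repr.symm (C ((fb d).repr u))) := by
  have h1 := ((fb d).repr.symm.toContinuousLinearEquiv.hasSum' (f := fun x : Γd d =>
      (Complex.I * (V x : ℂ)) • (⟪g x, (fb d).repr u⟫ • delta x - ⟪delta x, (fb d).repr u⟫ • g x))).2 (hC ((fb d).repr u))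
  convert h1 using 2 with x
  · simp only [LinearIsometryEquiv.coe_toContinuousLinearEquiv, map_smul, map_sub]
    rw [← repr_fb x, LinearIsometryEquiv.symm_apply_apply, LinearIsometryEquiv.inner_map_map,
      ← LinearIsometryEquiv.inner_map_map (fb d).repr (_ : W d) u, LinearIsometryEquiv.apply_symm_apply]
  · rfl

/-! ### Series bounds -/

lemma phi_sum {d : ℕ} {V : Γd d → ℝ} {c : ℝ} (hV : Phi 2 3 V < ENNReal.ofReal c) :
    Summable (fun x => |V x| * (1 + lnorm x) ^ 6) ∧ ∑' x, |V x| * (1 + lnorm x) ^ 6 ≤ c := by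
  have hc : 0 < c := by
    by_contra h
    rw [ENNReal.ofReal_of_nonpos (not_lt.1 h)] at hV
    exact not_lt_bot hV
  have hnn : ∀ x : Γd d, 0 ≤ |V x| * (1 + lnorm x) ^ 6 := fun x => by
    have := lnorm_nonneg x
    positivity
  unfold Phi at hV
  set a : Γd d → ℝ≥0∞ := fun x => ENNReal.ofReal (|V x| ^ ((1 : ℝ) / (2 : ℕ)) * (1 + lnorm x) ^ 3) with ha
  have hsq : ∀ x, ENNReal.ofReal (|V x| * (1 + lnorm x) ^ 6) = a x * a x := by
    intro x
    have := lnorm_nonneg x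
    rw [ha, ← ENNReal.ofReal_mul (by positivity)]
    congr 1
    have h2 : |V x| ^ ((1 : ℝ) / (2 : ℕ)) * |V x| ^ ((1 : ℝ) / (2 : ℕ)) = |V x| := by
      rw [← Real.rpow_add_of_nonneg (abs_nonneg _) (by positivity) (by positivity)]
      norm_num
    calc _ = (|V x| ^ ((1 : ℝ) / (2 : ℕ)) * |V x| ^ ((1 : ℝ) / (2 : ℕ))) * (1 + lnorm x) ^ 6 := by rw [h2]
      _ = _ := by ring
  have hle : ∑' x, ENNReal.ofReal (|V x| * (1 + lnorm x) ^ 6) ≤ ENNReal.ofReal c := by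
    refine le_trans ?_ hV.le
    rw [pow_two, ← ENNReal.tsum_mul_right]
    refine ENNReal.tsum_le_tsum fun x => ?_
    rw [hsq]
    gcongr
    exact ENNReal.le_tsum x
  have hs : Summable (fun x => |V x| * (1 + lnorm x) ^ 6) := by
    have := ENNReal.summable_toReal (ne_top_of_le_ne_top ENNReal.ofReal_ne_top hle)
    refine this.congr fun x => ?_
    rw [ENNReal.toReal_ofReal (hnn x)]
  refine ⟨hs, ?_⟩
  rw [← ENNReal.ofReal_tsum_of_nonneg hnn hs] at hle
  exact (ENNReal.ofReal_le_ofReal_iff hc.le).1 hle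

lemma sum_bd {ι : Type*} {z : ι → ℂ} {s : ℂ} (hz : HasSum z s) {b : ι → ℝ} (hb : Summable b) {c D : ℝ}
    (hc : ∑' x, b x ≤ c) (hD : 0 ≤ D) (hzb : ∀ x, ‖z x‖ ≤ D * b x) : ‖s‖ ≤ D * c := by
  rw [← hz.tsum_eq]
  refine (tsum_of_norm_bounded (hb.mul_left D).hasSum hzb).trans ?_
  rw [tsum_mul_left]
  gcongr

/-- The sesquilinear form of the commutator. -/
lemma form_sum {d : ℕ} {V : Γd d → ℝ} {γ : Γd d → W d} {v s : W d}
    (h : HasSum (fun x => (Complex.I * (V x : ℂ)) • (⟪γ x, v⟫ • fb d x - ⟪fb d x, v⟫ • γ x)) s) (w : W d) :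
    HasSum (fun x => (Complex.I * (V x : ℂ)) * (⟪γ x, v⟫ * ⟪w, fb d x⟫ - ⟪fb d x, v⟫ * ⟪w, γ x⟫)) ⟪w, s⟫ := by
  have := (innerSL ℂ w).hasSum h
  have e1 : (fun x => (Complex.I * (V x : ℂ)) * (⟪γ x, v⟫ * ⟪w, fb d x⟫ - ⟪fb d x, v⟫ * ⟪w, γ x⟫)) =
      fun x => (innerSL ℂ w) ((Complex.I * (V x : ℂ)) • (⟪γ x, v⟫ • fb d x - ⟪fb d x, v⟫ • γ x)) := by
    funext x
    rw [innerSL_apply_apply, inner_smul_right, inner_sub_right, inner_smul_right, inner_smul_right]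
  rw [e1]
  exact this

lemma form_symm {d : ℕ} {V : Γd d → ℝ} {γ : Γd d → W d} {C : W d → W d}
    (h : ∀ v, HasSum (fun x => (Complex.I * (V x : ℂ)) • (⟪γ x, v⟫ • fb d x - ⟪fb d x, v⟫ • γ x)) (C v))
    (v w : W d) : ⟪w, C v⟫ = ⟪C w, v⟫ := by
  have h1 := form_sum (h v) w
  have h2 := (form_sum (h w) v)
  have h3 := Complex.hasSum_conj'.2 h2
  rw [inner_conj_symm] at h3
  refine h1.unique ?_
  convert h3 using 2 with x
  simp only [map_mul, map_sub, Complex.conj_I, Complex.conj_ofReal, inner_conj_symm]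
  ring

lemma pos_part {d : ℕ} (hd : 3 ≤ d) {e : (Fin d → ℝ) → ℝ} (hC : ContDiff ℝ 2 e) (hM : IsMorse e)
    (hm : ∀ j, MemLp (fun θ => (pd e j (Pt θ) : ℂ)) ∞ (tm d))
    (hfm : MemLp (fun θ => (gradSq e (Pt θ) : ℂ)) ∞ (tm d))
    {V : Γd d → ℝ} {γ : Γd d → W d} {C : W d → W d}
    (h : ∀ v, HasSum (fun x => (Complex.I * (V x : ℂ)) • (⟪γ x, v⟫ • fb d x - ⟪fb d x, v⟫ • γ x)) (C v))
    {q : Γd d → (Fin d → ℝ) → ℂ} {D c : ℝ} (hD : 0 ≤ D) (hq : ∀ x, Nice (q x) (D * (1 + lnorm x) ^ 2))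
    (hγ : ∀ x, γ x =ᵐ[tm d] fun θ => q x (Pt θ))
    (hs : Summable (fun x => |V x| * (1 + lnorm x) ^ 6)) (hc : ∑' x, |V x| * (1 + lnorm x) ^ 6 ≤ c)
    (hsmall : 2 * D * Kc e * c ≤ 1) (u : W d) :
    ∃ r : ℝ, 0 ≤ r ∧ ⟪u, mulOp (fun θ => gradSq e (Pt θ)) hfm u + C u⟫ = (r : ℂ) := by
  set N := Nsq e hm u with hN
  have hN0 : 0 ≤ N := Nsq_nonneg e hm u
  have hK := Kc_nonneg e
  have h1 : ⟪u, mulOp (fun θ => gradSq e (Pt θ)) hfm u⟫ = (N : ℂ) := by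
    rw [hN, (Nsq_eq e hm u).2, L2.inner_def, ← integral_complex_ofReal]
    refine integral_congr_ae ?_
    filter_upwards [mulOp_coe _ hfm u] with θ hθ
    rw [hθ, RCLike.inner_apply, mul_assoc, RCLike.mul_conj]
    push_cast
    rfl
  have h2 : (starRingEnd ℂ) ⟪u, C u⟫ = ⟪u, C u⟫ := by
    rw [inner_conj_symm]
    exact (form_symm h u u).symm
  have h3 : ((⟪u, C u⟫).re : ℂ) = ⟪u, C u⟫ := Complex.conj_eq_iff_re.1 h2
  have hb : ∀ x, ‖⟪fb d x, u⟫‖ ≤ 1 * √(Kc e * N) := fun x =>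
    pair_bd hd hC hM hm u (fb d x) zero_le_one (fb_bd x)
  have hg : ∀ x, ‖⟪γ x, u⟫‖ ≤ D * (1 + lnorm x) ^ 2 * √(Kc e * N) := fun x => by
    refine pair_bd hd hC hM hm u (γ x) (hq x).nonneg ?_
    filter_upwards [hγ x] with θ hθ
    rw [hθ]; exact (hq x).bd _
  have h4 : ‖⟪u, C u⟫‖ ≤ (2 * D * (Kc e * N)) * c := by
    refine sum_bd (form_sum (h u) u) hs hc (by positivity) fun x => ?_
    have hx := lnorm_nonneg x
    have hS : √(Kc e * N) * √(Kc e * N) = Kc e * N := Real.mul_self_sqrt (by positivity)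
    have e1 : ‖⟪γ x, u⟫ * ⟪u, fb d x⟫‖ ≤ D * (1 + lnorm x) ^ 2 * (Kc e * N) := by
      rw [norm_mul, norm_inner_symm u (fb d x)]
      calc _ ≤ (D * (1 + lnorm x) ^ 2 * √(Kc e * N)) * (1 * √(Kc e * N)) :=
            mul_le_mul (hg x) (hb x) (norm_nonneg _) (by positivity)
        _ = D * (1 + lnorm x) ^ 2 * (√(Kc e * N) * √(Kc e * N)) := by ring
        _ = _ := by rw [hS]
    have e2 : ‖⟪fb d x, u⟫ * ⟪u, γ x⟫‖ ≤ D * (1 + lnorm x) ^ 2 * (Kc e * N) := by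
      rw [norm_mul, norm_inner_symm u (γ x), mul_comm, ← norm_inner_symm u (fb d x), ← norm_mul]
      exact e1
    rw [norm_mul, norm_mul, Complex.norm_I, Complex.norm_real, one_mul, Real.norm_eq_abs]
    calc _ ≤ |V x| * (D * (1 + lnorm x) ^ 2 * (Kc e * N) + D * (1 + lnorm x) ^ 2 * (Kc e * N)) := by
          gcongr
          exact (norm_sub_le _ _).trans (add_le_add e1 e2)
      _ = 2 * D * (Kc e * N) * (|V x| * (1 + lnorm x) ^ 2) := by ring
      _ ≤ _ := by
          gcongr
          · linarith
          · norm_num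
  refine ⟨N + (⟪u, C u⟫).re, ?_, ?_⟩
  · have h5 := (Complex.abs_re_le_norm ⟪u, C u⟫).trans h4
    have h6 := neg_le_of_abs_le h5
    have h7 : 2 * D * (Kc e * N) * c ≤ N := by
      calc _ = 2 * D * Kc e * c * N := by ring
        _ ≤ 1 * N := by gcongr
        _ = N := one_mul N
    linarith
  · rw [inner_add_right, h1, ← h3]
    push_cast
    simp

lemma eig_part {d : ℕ} (hd : 3 ≤ d) {f : (Fin d → ℝ) → ℝ} (hC : ContDiff ℝ 2 f) (hM : IsMorse f)
    (hm : ∀ j, MemLp (fun θ => (pd f j (Pt θ) : ℂ)) ∞ (tm d))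
    (hfm : MemLp (fun θ => (f (Pt θ) : ℂ)) ∞ (tm d)) {L : ℝ} (hL : ∀ j, Nice (pd f j) L) (hfL : Nice f L)
    {V : Γd d → ℝ} {γ : Γd d → W d} {C : W d → W d}
    (h : ∀ v, HasSum (fun x => (Complex.I * (V x : ℂ)) • (⟪γ x, v⟫ • fb d x - ⟪fb d x, v⟫ • γ x)) (C v))
    {q : Γd d → (Fin d → ℝ) → ℂ} {D c : ℝ} (hD : 0 ≤ D) (hq : ∀ x, Nice (q x) (D * (1 + lnorm x) ^ 2))
    (hγ : ∀ x, γ x =ᵐ[tm d] fun θ => q x (Pt θ))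
    (hs : Summable (fun x => |V x| * (1 + lnorm x) ^ 6)) (hc : ∑' x, |V x| * (1 + lnorm x) ^ 6 ≤ c)
    (hsmall : d * (8 * L * D * Kc f * c) < 1) (u : W d) (μ : ℝ)
    (hu : mulOp (fun θ => f (Pt θ)) hfm u + C u = (μ : ℂ) • u) : u = 0 := by
  set N := Nsq f hm u with hN
  have hN0 : 0 ≤ N := Nsq_nonneg f hm u
  have hK := Kc_nonneg f
  have hL0 := hfL.nonneg
  have hfb : ∀ x : Γd d, fb d x =ᵐ[tm d] fun θ => (fun p => Complex.exp (-(Complex.I * (dotZ p x : ℝ)))) (Pt θ) :=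
    fun x => fb_apply x
  have hb : ∀ x, ‖⟪fb d x, u⟫‖ ≤ (1 + lnorm x) * √(Kc f * N) := fun x => by
    refine pair_bd hd hC hM hm u (fb d x) (nice_exp x).nonneg ?_
    filter_upwards [hfb x] with θ hθ
    rw [hθ]; exact (nice_exp x).bd _
  have hg : ∀ x, ‖⟪γ x, u⟫‖ ≤ D * (1 + lnorm x) ^ 2 * √(Kc f * N) := fun x => by
    refine pair_bd hd hC hM hm u (γ x) (hq x).nonneg ?_
    filter_upwards [hγ x] with θ hθ
    rw [hθ]; exact (hq x).bd _
  have key : ∀ j, ‖mulOp (fun θ => pd f j (Pt θ)) (hm j) u‖ ^ 2 ≤ 8 * L * D * (Kc f * N) * c := by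
    intro j
    refine comm_lim (hL j) (hm j) hfm hfL j (taylor2 (hC.of_le (by norm_num)) j (hL j)) u _ fun ε hε => ?_
    set A := Aop (fun θ => pd f j (Pt θ)) (hm j) j ε with hA
    set A' := Aop' (fun θ => pd f j (Pt θ)) (hm j) j ε with hA'
    have hadj : ∀ v w, ⟪A' v, w⟫ = ⟪v, A w⟫ := fun v w => Aop_adj _ (hm j) j ε v w
    set S := √(Kc f * N) with hSdef
    have hS : S * S = Kc f * N := Real.mul_self_sqrt (by positivity)
    have hS0 : 0 ≤ S := Real.sqrt_nonneg _
    have b1 : ∀ x, ‖⟪A' (γ x), u⟫‖ ≤ 2 * L * (D * (1 + lnorm x) ^ 2) * S := fun x =>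
      pair_bd hd hC hM hm u _ (mul_nonneg (by positivity) (hq x).nonneg) (Aop'_bd (hL j) (hm j) j hε (hq x) (γ x) (hγ x))
    have b2 : ∀ x, ‖⟪A (γ x), u⟫‖ ≤ 2 * L * (D * (1 + lnorm x) ^ 2) * S := fun x =>
      pair_bd hd hC hM hm u _ (mul_nonneg (by positivity) (hq x).nonneg) (Aop_bd (hL j) (hm j) j hε (hq x) (γ x) (hγ x))
    have b3 : ∀ x, ‖⟪A' (fb d x), u⟫‖ ≤ 2 * L * (1 + lnorm x) * S := fun x =>
      pair_bd hd hC hM hm u _ (mul_nonneg (by positivity) (nice_exp x).nonneg) (Aop'_bd (hL j) (hm j) j hε (nice_exp x) (fb d x) (hfb x))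
    have b4 : ∀ x, ‖⟪A (fb d x), u⟫‖ ≤ 2 * L * (1 + lnorm x) * S := fun x =>
      pair_bd hd hC hM hm u _ (mul_nonneg (by positivity) (nice_exp x).nonneg) (Aop_bd (hL j) (hm j) j hε (nice_exp x) (fb d x) (hfb x))
    set Mf := mulOp (fun θ => f (Pt θ)) hfm with hMf
    have s1 := form_sum (h (A u)) u
    have s2 := form_sum (h u) (A' u)
    have s3 := s2.sub s1
    have hid : ⟪u, Mf (A u)⟫ - ⟪u, A (Mf u)⟫ = ⟪A' u, C u⟫ - ⟪u, C (A u)⟫ := by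
      have i1 : ⟪u, Mf (A u)⟫ + ⟪u, C (A u)⟫ = (μ : ℂ) * ⟪u, A u⟫ := by
        rw [hMf, ← mulOp_symm, form_symm h, ← inner_add_left, ← hMf, hu, inner_smul_left, Complex.conj_ofReal]
      have i2 : ⟪u, A (Mf u)⟫ + ⟪A' u, C u⟫ = (μ : ℂ) * ⟪u, A u⟫ := by
        rw [← hadj, ← inner_add_right, hu, inner_smul_right, hadj]
      linear_combination i1 - i2
    rw [hid]
    refine sum_bd s3 hs hc (by positivity) fun x => ?_
    have hx := lnorm_nonneg x
    rw [← hadj, ← hadj, ← mul_sub, norm_mul, norm_mul, Complex.norm_I, Complex.norm_real, one_mul, Real.norm_eq_abs]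
    have t : ∀ {z w : ℂ} {p r : ℝ}, ‖z‖ ≤ p * S → ‖w‖ ≤ r * S → 0 ≤ p → ‖z * w‖ ≤ p * r * (Kc f * N) := by
      intro z w p r hz hw hp
      rw [norm_mul, ← hS]
      calc _ ≤ (p * S) * (r * S) := mul_le_mul hz hw (norm_nonneg _) (by positivity)
        _ = _ := by ring
    have q1 := t (hg x) (by rw [hadj, norm_inner_symm]; exact b4 x : ‖⟪A' u, fb d x⟫‖ ≤ _) (by positivity)
    have q2 := t (hb x) (by rw [hadj, norm_inner_symm]; exact b2 x : ‖⟪A' u, γ x⟫‖ ≤ _) (by positivity)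
    have q3 := t (b1 x) (by rw [norm_inner_symm]; exact hb x : ‖⟪u, fb d x⟫‖ ≤ _) (by positivity)
    have q4 := t (b3 x) (by rw [norm_inner_symm]; exact hg x : ‖⟪u, γ x⟫‖ ≤ _) (by positivity)
    calc _ ≤ |V x| * (8 * L * D * (Kc f * N) * (1 + lnorm x) ^ 3) := by
          gcongr
          refine (norm_sub_le _ _).trans ((add_le_add (norm_sub_le _ _) (norm_sub_le _ _)).trans ?_)
          refine (add_le_add (add_le_add q1 q2) (add_le_add q3 q4)).trans (le_of_eq ?_)
          ring
      _ = 8 * L * D * (Kc f * N) * (|V x| * (1 + lnorm x) ^ 3) := by ring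
      _ ≤ _ := by
          gcongr
          · linarith
          · norm_num
  have hfin : N ≤ d * (8 * L * D * Kc f * c) * N := by
    calc N ≤ ∑ _j : Fin d, 8 * L * D * (Kc f * N) * c := Finset.sum_le_sum fun j _ => key j
      _ = _ := by simp; ring
  have : N = 0 := by
    by_contra hne
    have : 0 < N := lt_of_le_of_ne hN0 (Ne.symm hne)
    nlinarith
  exact eq_zero_of_Nsq hd hC hM hm u this

lemma exists_const {d : ℕ} (e : (Fin d → ℝ) → ℝ) (hper : Periodic2pi e) (heC3 : ContDiff ℝ 3 e) :
    ContDiff ℝ 2 (gradSq e) ∧ ∃ L : ℝ, 0 ≤ L ∧ (∀ k, Nice (pd e k) L) ∧ Nice (gradSq e) L ∧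
      (∀ k, Nice (pd (gradSq e) k) L) := by
  have h2 : ContDiff ℝ 2 e := heC3.of_le (by norm_num)
  have hpd : ∀ k, ContDiff ℝ 2 (pd e k) := fun k => by
    unfold pd
    exact (heC3.fderiv_right (m := 2) (by norm_num)).clm_apply contDiff_const
  have hf : ContDiff ℝ 2 (gradSq e) := by
    unfold gradSq
    exact ContDiff.sum fun k _ => (hpd k).pow 2
  refine ⟨hf, ?_⟩
  choose L1 hL1 using fun k => exists_nice (continuous_pd h2 k) (per_pd hper k)
  obtain ⟨L2, hL2⟩ := exists_nice (contDiff_gradSq h2) (per_gradSq hper)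
  choose L3 hL3 using fun k => exists_nice (continuous_pd hf k) (per_pd (per_gradSq hper) k)
  have s1 : ∀ k, L1 k ≤ ∑ k, L1 k := fun k => Finset.single_le_sum (fun k _ => (hL1 k).nonneg) (Finset.mem_univ k)
  have s3 : ∀ k, L3 k ≤ ∑ k, L3 k := fun k => Finset.single_le_sum (fun k _ => (hL3 k).nonneg) (Finset.mem_univ k)
  have n1 : 0 ≤ ∑ k, L1 k := Finset.sum_nonneg fun k _ => (hL1 k).nonneg
  have n3 : 0 ≤ ∑ k, L3 k := Finset.sum_nonneg fun k _ => (hL3 k).nonneg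
  have n2 := hL2.nonneg
  refine ⟨∑ k, L1 k + L2 + ∑ k, L3 k, by positivity, fun k => (hL1 k).mono ?_, hL2.mono ?_, fun k => (hL3 k).mono ?_⟩
  · linarith [s1 k]
  · linarith
  · linarith [s3 k]

/-- Positivity and absence of eigenvalues for
`B = h(|∇𝔢|²) + C_V` when `Φ_{2,3}(V)` is small. -/
theorem statement14 (d : ℕ) (hd : 3 ≤ d)
    (e : (Fin d → ℝ) → ℝ) (he : IsDispersion e) (heC3 : ContDiff ℝ 3 e) (heM : CondM e) :
    ∃ c : ℝ, 0 < c ∧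
      ∀ (V : Γd d → ℝ) (g : Γd d → L2 d) (G Cv : L2 d →L[ℂ] L2 d),
        IsGVec e g → IsMultiplier (gradSq e) G → IsCommOp V g Cv →
        Phi 2 3 V < ENNReal.ofReal c →
        (∀ ψ : L2 d, ∃ r : ℝ, 0 ≤ r ∧ ⟪ψ, (G + Cv) ψ⟫ = (r : ℂ)) ∧
        (∀ (ψ : L2 d) (μ : ℂ), (G + Cv) ψ = μ • ψ → ψ = 0) := by
  have h2 : ContDiff ℝ 2 e := heC3.of_le (by norm_num)
  obtain ⟨hf, L, hL0, hL1, hL2, hL3⟩ := exists_const e he.1 heC3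
  have hme : ∀ j, MemLp (fun θ => (pd e j (Pt θ) : ℂ)) ∞ (tm d) := fun j =>
    memLp_comp_Pt (continuous_pd h2 j).continuous (hL1 j)
  have hmf : ∀ j, MemLp (fun θ => (pd (gradSq e) j (Pt θ) : ℂ)) ∞ (tm d) := fun j =>
    memLp_comp_Pt (continuous_pd hf j).continuous (hL3 j)
  have hfm : MemLp (fun θ => (gradSq e (Pt θ) : ℂ)) ∞ (tm d) := memLp_comp_Pt hf.continuous hL2
  set D : ℝ := 2 * (d + 1) * L with hDdef
  have hD : 0 ≤ D := by positivity
  have hKe := Kc_nonneg e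
  have hKf := Kc_nonneg (gradSq e)
  set X : ℝ := 2 * D * Kc e with hX
  set Y : ℝ := d * (8 * L * D * Kc (gradSq e)) with hY
  have hX0 : 0 ≤ X := by positivity
  have hY0 : 0 ≤ Y := by positivity
  refine ⟨(1 + X + Y)⁻¹, by positivity, ?_⟩
  intro V g G Cv hg hG hCv hPhi
  obtain ⟨hs, hc⟩ := phi_sum hPhi
  set c := (1 + X + Y)⁻¹ with hcdef
  have hc1 : (1 + X + Y) * c = 1 := mul_inv_cancel₀ (by positivity)
  have hc0 : 0 < c := by positivity
  have hXc : 2 * D * Kc e * c ≤ 1 := by nlinarith [mul_nonneg hX0 hc0.le, mul_nonneg hY0 hc0.le]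
  have hYc : d * (8 * L * D * Kc (gradSq e) * c) < 1 := by
    have : d * (8 * L * D * Kc (gradSq e) * c) = Y * c := by rw [hY]; ring
    rw [this]
    nlinarith [mul_nonneg hX0 hc0.le]
  have hq : ∀ x, Nice (ghat e x) (D * (1 + lnorm x) ^ 2) := fun x => nice_ghat hL1 hL2 x
  have hγ := fun x => gvec_coe h2 x (hq x) hg
  have hsum := comm_sum hCv
  have hform : ∀ ψ : L2 d, (fb d).repr.symm ((G + Cv) ψ) =
      mulOp (fun θ => gradSq e (Pt θ)) hfm ((fb d).repr.symm ψ) +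
        (fb d).repr.symm (Cv ((fb d).repr ((fb d).repr.symm ψ))) := by
    intro ψ
    rw [← mult_eq hf.continuous hfm hG, LinearIsometryEquiv.apply_symm_apply, ← map_add]
    rfl
  have hpos : ∀ ψ : L2 d, ∃ r : ℝ, 0 ≤ r ∧ ⟪ψ, (G + Cv) ψ⟫ = (r : ℂ) := by
    intro ψ
    obtain ⟨r, hr, hr2⟩ := pos_part hd h2 heM.1 hme hfm hsum hD hq hγ hs hc hXc ((fb d).repr.symm ψ)
    refine ⟨r, hr, ?_⟩
    rw [← hr2, ← hform, LinearIsometryEquiv.inner_map_map]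
  refine ⟨hpos, fun ψ μ hψ => ?_⟩
  by_contra hne
  obtain ⟨r, hr, hr2⟩ := hpos ψ
  rw [hψ, inner_smul_right, inner_self_eq_norm_sq_to_K] at hr2
  have hn : (‖ψ‖ : ℂ) ≠ 0 := by
    simpa using hne
  have hμ : μ = ((r / ‖ψ‖ ^ 2 : ℝ) : ℂ) := by
    push_cast
    rw [eq_div_iff (pow_ne_zero 2 hn)]
    exact hr2
  have hu := hform ψ
  rw [hψ, map_smul, hμ] at hu
  have := eig_part hd hf heM.2 hmf hfm hL3 hL2 hsum hD hq hγ hs hc hYc ((fb d).repr.symm ψ) _ hu.symm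
  exact hne (by simpa using this)


end LatSch
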